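/- arXiv:1306.3637 — 2 statements merged into one kernel-verified Lean document; each statement's English description precedes it below -/
import Mathlib

section
/- Let L = 2π. There exists δ > 0 such that for every λ ∈ ℂ with λ ≠ 0 that admits a nonzero eigenfunction, i.e. a φ ∈ H³((0,2π);ℂ), φ ≢ 0, with λφ + φ′ + φ‴ = 0 on (0,2π) and φ(0) = φ(2π) = φ′(2π) = 0, one has Re λ ≤ −δ. In other words, 0 is an eigenvalue of the linear KdV operator A, and every other eigenvalue has real part bounded away from 0. -/
open Set Real

/-- `(lam, φ)` is an eigenpair of the linear KdV operator `A φ = −φ′ − φ‴` on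
`(0,2π)` with domain boundary conditions `φ(0) = φ(2π) = φ′(2π) = 0`: `φ` is `C³`
on `[0,2π]`, not identically zero, and `lam φ + φ′ + φ‴ = 0` on `(0,2π)`. -/
def IsKdVEigenpair (lam : ℂ) (φ : ℝ → ℂ) : Prop :=
  ContDiffOn ℝ 3 φ (Icc (0:ℝ) (2 * Real.pi)) ∧
  (∃ x ∈ Icc (0:ℝ) (2 * Real.pi), φ x ≠ 0) ∧
  (∀ x ∈ Ioo (0:ℝ) (2 * Real.pi),
    lam * φ x + derivWithin φ (Icc (0:ℝ) (2 * Real.pi)) x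
      + iteratedDerivWithin 3 φ (Icc (0:ℝ) (2 * Real.pi)) x = 0) ∧
  φ 0 = 0 ∧ φ (2 * Real.pi) = 0 ∧
  derivWithin φ (Icc (0:ℝ) (2 * Real.pi)) (2 * Real.pi) = 0

open MeasureTheory

lemma kdv_poincare (f f' : ℝ → ℂ) (hf : ContinuousOn f (Icc 0 (2 * Real.pi)))
    (hf' : ContinuousOn f' (Icc 0 (2 * Real.pi)))
    (hd : ∀ x ∈ Ioo 0 (2 * Real.pi), HasDerivAt f (f' x) x)
    (h0 : f 0 = 0) (h1 : f (2 * Real.pi) = 0)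
    (ho : ∫ x in (0:ℝ)..(2 * Real.pi), f x * (1 - Real.cos x : ℂ) = 0) :
    2 / 3 * ∫ x in (0:ℝ)..(2 * Real.pi), ‖f x‖ ^ 2 ≤
      ∫ x in (0:ℝ)..(2 * Real.pi), ‖f' x‖ ^ 2 := by
  have hpi := Real.pi_pos
  have hab : (0:ℝ) < 2 * Real.pi := by positivity
  have memLp : ∀ g : ℝ → ℂ, ContinuousOn g (Icc 0 (2 * Real.pi)) →
      MemLp g 2 (volume.restrict (Ioc 0 (2 * Real.pi))) := by
    intro g hg
    obtain ⟨C, hC⟩ := isCompact_Icc.exists_bound_of_continuousOn hg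
    refine MemLp.of_bound ((hg.mono Ioc_subset_Icc_self).aestronglyMeasurable measurableSet_Ioc)
      C ?_
    filter_upwards [ae_restrict_mem measurableSet_Ioc] with x hx
    exact hC x (Ioc_subset_Icc_self hx)
  have P := hasSum_sq_fourierCoeffOn hab (memLp f hf)
  have P' := hasSum_sq_fourierCoeffOn hab (memLp f' hf')
  set c := fourierCoeffOn hab f with hc
  set c' := fourierCoeffOn hab f' with hc'
  have hu : uIcc (0:ℝ) (2 * Real.pi) = Icc 0 (2 * Real.pi) := uIcc_of_le hab.le
  have hrel : ∀ n : ℤ, n ≠ 0 → ‖c' n‖ ^ 2 = (n:ℝ) ^ 2 * ‖c n‖ ^ 2 := by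
    intro n hn
    have hnC : (n:ℂ) ≠ 0 := by exact_mod_cast hn
    have hpC : (Real.pi:ℂ) ≠ 0 := by exact_mod_cast hpi.ne'
    have := fourierCoeffOn_of_hasDerivAt_Ioo hab hn (f := f) (f' := f') (by rwa [hu])
      (by rw [min_eq_left hab.le, max_eq_right hab.le]; exact hd)
      (ContinuousOn.intervalIntegrable (by rwa [hu]))
    rw [h0, h1] at this
    have h2 : c' n = Complex.I * n * c n := by
      rw [hc, this, ← hc']
      have := Complex.I_ne_zero
      push_cast
      field_simp
      ring
    rw [h2]
    simp [mul_pow]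
  have hc0 : c 0 = (c 1 + c (-1)) / 2 := by
    have hfi : IntervalIntegrable f volume 0 (2 * Real.pi) :=
      ContinuousOn.intervalIntegrable (by rwa [hu])
    have hT : ∀ n : ℤ, IntervalIntegrable
        (fun x : ℝ => fourier (-n) (x : AddCircle (2 * Real.pi - 0)) • f x)
        volume 0 (2 * Real.pi) := by
      intro n
      refine ContinuousOn.intervalIntegrable ?_
      rw [hu]
      exact (((map_continuous (fourier (-n))).comp
        (AddCircle.continuous_mk' _)).continuousOn).smul hf
    have key : (∫ x in (0:ℝ)..(2 * Real.pi), fourier (-0) (x : AddCircle (2 * Real.pi - 0)) • f x)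
        - ((∫ x in (0:ℝ)..(2 * Real.pi), fourier (-1) (x : AddCircle (2 * Real.pi - 0)) • f x)
        + (∫ x in (0:ℝ)..(2 * Real.pi), fourier (-(-1)) (x : AddCircle (2 * Real.pi - 0)) • f x))
          * (1 / 2) = 0 := by
      rw [← intervalIntegral.integral_add (hT 1) (hT (-1)),
        ← intervalIntegral.integral_mul_const,
        ← intervalIntegral.integral_sub (hT 0) (((hT 1).add (hT (-1))).mul_const _), ← ho]
      refine intervalIntegral.integral_congr fun x _ => ?_
      have hpC : (Real.pi:ℂ) ≠ 0 := by exact_mod_cast hpi.ne'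
      simp only [fourier_coe_apply, smul_eq_mul, Complex.ofReal_cos, Complex.cos]
      have e1 : 2 * (Real.pi:ℂ) * Complex.I * ((-1 : ℤ):ℂ) * x / ((2 * Real.pi - 0 : ℝ):ℂ)
          = - x * Complex.I := by push_cast; field_simp; ring
      have e2 : 2 * (Real.pi:ℂ) * Complex.I * ((-(-1) : ℤ):ℂ) * x / ((2 * Real.pi - 0 : ℝ):ℂ)
          = x * Complex.I := by push_cast; field_simp; ring
      rw [e1, e2]
      simp
      ring
    rw [hc]
    simp only [fourierCoeffOn_eq_integral]
    rw [← smul_add, eq_div_iff two_ne_zero, ← sub_eq_zero]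
    rw [smul_mul_assoc, ← smul_sub]
    have : ∀ A B : ℂ, A - B * (1 / 2) = 0 → A * 2 - B = 0 := by
      intro A B h; linear_combination 2 * h
    rw [this _ _ key, smul_zero]
  have hn0 : ‖c 0‖ ^ 2 ≤ (‖c 1‖ ^ 2 + ‖c (-1)‖ ^ 2) / 2 := by
    have h1 : ‖c 0‖ ≤ (‖c 1‖ + ‖c (-1)‖) / 2 := by
      rw [hc0, norm_div]
      have := norm_add_le (c 1) (c (-1))
      simp only [Complex.norm_ofNat]
      linarith
    have := norm_nonneg (c 0)
    nlinarith [sq_nonneg (‖c 1‖ - ‖c (-1)‖), norm_nonneg (c 1), norm_nonneg (c (-1))]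
  have S := P'.sub (P.mul_left (2 / 3))
  have fin := sum_le_hasSum ({0, 1, -1} : Finset ℤ) (fun n hn => by
    simp only [Finset.mem_insert, Finset.mem_singleton, not_or] at hn
    have hn2 : (1:ℝ) ≤ (n:ℝ) ^ 2 := by
      have : (1:ℤ) ≤ n ^ 2 := by have := pow_pos (abs_pos.2 hn.1) 2; rw [sq_abs] at this; linarith
      exact_mod_cast this
    rw [hrel n hn.1]
    nlinarith [sq_nonneg ‖c n‖]) S
  rw [Finset.sum_insert (by decide), Finset.sum_insert (by decide), Finset.sum_singleton,
    hrel 1 (by norm_num), hrel (-1) (by norm_num)] at fin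
  push_cast at fin
  simp only [smul_eq_mul, sub_zero] at fin
  have h3 : 0 ≤ (2 * Real.pi)⁻¹ * ((∫ x in (0:ℝ)..(2 * Real.pi), ‖f' x‖ ^ 2) -
      2 / 3 * ∫ x in (0:ℝ)..(2 * Real.pi), ‖f x‖ ^ 2) := by
    nlinarith [sq_nonneg ‖c' 0‖]
  have := nonneg_of_mul_nonneg_right h3 (by positivity)
  linarith

lemma kdv_gap (lam : ℂ) (hl : lam ≠ 0) (f g h k : ℝ → ℂ)
    (hf : ContinuousOn f (Icc 0 (2 * Real.pi)))
    (hg : ContinuousOn g (Icc 0 (2 * Real.pi)))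
    (hh : ContinuousOn h (Icc 0 (2 * Real.pi)))
    (df : ∀ x ∈ Ioo 0 (2 * Real.pi), HasDerivAt f (g x) x)
    (dg : ∀ x ∈ Ioo 0 (2 * Real.pi), HasDerivAt g (h x) x)
    (dh : ∀ x ∈ Ioo 0 (2 * Real.pi), HasDerivAt h (k x) x)
    (hne : ∃ x ∈ Icc (0:ℝ) (2 * Real.pi), f x ≠ 0)
    (eqn : ∀ x ∈ Ioo 0 (2 * Real.pi), lam * f x + g x + k x = 0)
    (h0 : f 0 = 0) (h1 : f (2 * Real.pi) = 0) (h2 : g (2 * Real.pi) = 0) :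
    lam.re ≤ -(1 / (8 * Real.pi)) := by
  have hpi := Real.pi_pos
  have hab : (0:ℝ) < 2 * Real.pi := by positivity
  have hu : uIcc (0:ℝ) (2 * Real.pi) = Icc 0 (2 * Real.pi) := uIcc_of_le hab.le
  -- orthogonality to `1 - cos`
  have ho : ∫ x in (0:ℝ)..(2 * Real.pi), f x * (1 - Real.cos x : ℂ) = 0 := by
    have := intervalIntegral.integral_eq_sub_of_hasDerivAt_of_le hab.le
      (f := fun x => h x * (1 - Real.cos x : ℂ) - g x * (Real.sin x : ℂ) + f x)
      (f' := fun x => -lam * (f x * (1 - Real.cos x : ℂ))) (by fun_prop)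
      (fun x hx => by
        have hcos := (Real.hasDerivAt_cos x).ofReal_comp
        have hsin := (Real.hasDerivAt_sin x).ofReal_comp
        have := (((dh x hx).mul (hcos.const_sub 1)).sub ((dg x hx).mul hsin)).add (df x hx)
        refine HasDerivAt.congr_deriv this ?_
        push_cast
        linear_combination (1 - Complex.cos x) * eqn x hx)
      (ContinuousOn.intervalIntegrable (by rw [hu]; fun_prop))
    rw [intervalIntegral.integral_const_mul] at this
    simp [h0, h1, h2, hl] at this
    simpa using this
  have poin := kdv_poincare f g hf hg df h0 h1 ho
  have if2 : IntervalIntegrable (fun x => ‖f x‖ ^ 2) volume 0 (2 * Real.pi) :=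
    ContinuousOn.intervalIntegrable (by rw [hu]; fun_prop)
  have ig2 : IntervalIntegrable (fun x => ‖g x‖ ^ 2) volume 0 (2 * Real.pi) :=
    ContinuousOn.intervalIntegrable (by rw [hu]; fun_prop)
  have ix2 : IntervalIntegrable (fun x => x * ‖f x‖ ^ 2) volume 0 (2 * Real.pi) :=
    ContinuousOn.intervalIntegrable (by rw [hu]; fun_prop)
  -- multiplier identity
  have hm := intervalIntegral.integral_eq_sub_of_hasDerivAt_of_le hab.le
      (f := fun x => x * inner ℝ (h x) (f x) - inner ℝ (g x) (f x) - x * ‖g x‖ ^ 2 * (1 / 2)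
        + x * ‖f x‖ ^ 2 * (1 / 2))
      (f' := fun x => -lam.re * (x * ‖f x‖ ^ 2) - 3 / 2 * ‖g x‖ ^ 2 + 1 / 2 * ‖f x‖ ^ 2)
      (((continuousOn_id.mul (hh.inner hf)).sub (hg.inner hf)).sub (by fun_prop) |>.add
        (by fun_prop))
      (fun x hx => by
        have i := hasDerivAt_id x
        have := (((i.mul ((dh x hx).inner ℝ (df x hx))).sub ((dg x hx).inner ℝ (df x hx))).sub
          ((i.mul (dg x hx).norm_sq).mul_const (1 / 2))).add
          ((i.mul (df x hx).norm_sq).mul_const (1 / 2))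
        refine HasDerivAt.congr_deriv this ?_
        have hk : k x = -(lam * f x) - g x := by linear_combination eqn x hx
        rw [hk]
        simp only [Complex.inner, Complex.sq_norm, Complex.normSq_apply, id]
        simp
        ring)
      (ContinuousOn.intervalIntegrable (by rw [hu]; fun_prop))
  rw [intervalIntegral.integral_add ((ix2.const_mul _).sub (ig2.const_mul _)) (if2.const_mul _),
    intervalIntegral.integral_sub (ix2.const_mul _) (ig2.const_mul _)] at hm
  simp only [intervalIntegral.integral_const_mul] at hm
  simp only [h0, h1, h2, inner_zero_right, norm_zero] at hm
  have hpos : 0 < ∫ x in (0:ℝ)..(2 * Real.pi), ‖f x‖ ^ 2 := by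
    obtain ⟨x, hx, hfx⟩ := hne
    exact intervalIntegral.integral_pos hab (by fun_prop) (fun y _ => by positivity)
      ⟨x, hx, by positivity⟩
  have hX0 : 0 ≤ ∫ x in (0:ℝ)..(2 * Real.pi), x * ‖f x‖ ^ 2 :=
    intervalIntegral.integral_nonneg hab.le (fun x hx => mul_nonneg hx.1 (by positivity))
  have hX1 : ∫ x in (0:ℝ)..(2 * Real.pi), x * ‖f x‖ ^ 2 ≤
      2 * Real.pi * ∫ x in (0:ℝ)..(2 * Real.pi), ‖f x‖ ^ 2 := by
    rw [← intervalIntegral.integral_const_mul]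
    exact intervalIntegral.integral_mono_on hab.le ix2 (if2.const_mul _)
      (fun x hx => mul_le_mul_of_nonneg_right hx.2 (by positivity))
  by_contra hcon
  push Not at hcon
  set X := ∫ x in (0:ℝ)..(2 * Real.pi), x * ‖f x‖ ^ 2
  set N := ∫ x in (0:ℝ)..(2 * Real.pi), ‖f x‖ ^ 2
  set J := ∫ x in (0:ℝ)..(2 * Real.pi), ‖g x‖ ^ 2
  have a1 : -lam.re * X ≤ 1 / (8 * Real.pi) * X :=
    mul_le_mul_of_nonneg_right (by linarith) hX0
  have a2 : 1 / (8 * Real.pi) * X ≤ 1 / (8 * Real.pi) * (2 * Real.pi * N) :=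
    mul_le_mul_of_nonneg_left hX1 (by positivity)
  have a3 : 1 / (8 * Real.pi) * (2 * Real.pi * N) = N / 4 := by field_simp; ring
  linarith

lemma kdv_zero : IsKdVEigenpair 0 (fun x : ℝ => 1 - Complex.cos x) := by
  have hpi := Real.pi_pos
  have hab : (0:ℝ) < 2 * Real.pi := by positivity
  have uniq := uniqueDiffOn_Icc hab
  have cd : ContDiff ℝ 3 (fun x : ℝ => 1 - Complex.cos x) := by
    have : (fun x : ℝ => 1 - Complex.cos x) = fun x : ℝ => (1 - (Real.cos x : ℂ)) := by
      ext; simp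
    rw [this]
    exact contDiff_const.sub (Complex.ofRealCLM.contDiff.comp Real.contDiff_cos)
  have d1 : deriv (fun x : ℝ => 1 - Complex.cos x) = fun x : ℝ => Complex.sin x := by
    ext x
    have := ((Complex.hasDerivAt_cos x).comp_ofReal).const_sub 1
    simpa using this.deriv
  have d2 : deriv (fun x : ℝ => Complex.sin x) = fun x : ℝ => Complex.cos x := by
    ext x
    exact ((Complex.hasDerivAt_sin x).comp_ofReal).deriv
  have d3 : deriv (fun x : ℝ => Complex.cos x) = fun x : ℝ => -Complex.sin x := by
    ext x
    exact ((Complex.hasDerivAt_cos x).comp_ofReal).deriv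
  have dw : ∀ x ∈ Icc (0:ℝ) (2 * Real.pi),
      derivWithin (fun x : ℝ => 1 - Complex.cos x) (Icc (0:ℝ) (2 * Real.pi)) x
        = Complex.sin x := by
    intro x hx
    rw [(cd.differentiable (by norm_num) x).derivWithin (uniq x hx), d1]
  refine ⟨cd.contDiffOn, ⟨Real.pi, ⟨hpi.le, by linarith⟩, by simp⟩, ?_, by simp,
    by simp, ?_⟩
  · intro x hx
    have hx' := Ioo_subset_Icc_self hx
    rw [dw x hx', iteratedDerivWithin_eq_iteratedDeriv uniq cd.contDiffAt hx',
      iteratedDeriv_succ', iteratedDeriv_succ', iteratedDeriv_succ', iteratedDeriv_zero, d1, d2, d3]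
    ring
  · rw [dw _ ⟨hab.le, le_rfl⟩]
    simp

/-- at the critical length `L = 2π`, `0` is an eigenvalue of the linear
KdV operator `A`, and there exists `δ > 0` such that every eigenvalue `λ ≠ 0` of `A`
satisfies `Re λ ≤ −δ`: the nonzero eigenvalues have real parts bounded away from 0. -/
theorem kdv_spectral_gap :
    (∃ φ : ℝ → ℂ, IsKdVEigenpair 0 φ) ∧
    ∃ δ > 0, ∀ lam : ℂ, lam ≠ 0 →
      (∃ φ : ℝ → ℂ, IsKdVEigenpair lam φ) → lam.re ≤ -δ := by
  refine ⟨⟨_, kdv_zero⟩, 1 / (8 * Real.pi), by positivity, ?_⟩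
  rintro lam hl ⟨φ, hφ, hne, eqn, h0, h1, h2⟩
  have hpi := Real.pi_pos
  have hab : (0:ℝ) < 2 * Real.pi := by positivity
  have uniq := uniqueDiffOn_Icc hab
  have hc : ∀ m : ℕ, m ≤ 3 →
      ContinuousOn (iteratedDerivWithin m φ (Icc 0 (2 * Real.pi))) (Icc 0 (2 * Real.pi)) :=
    fun m hm => hφ.continuousOn_iteratedDerivWithin (by exact_mod_cast hm) uniq
  have hd : ∀ m : ℕ, m < 3 → ∀ x ∈ Ioo 0 (2 * Real.pi),
      HasDerivAt (iteratedDerivWithin m φ (Icc 0 (2 * Real.pi)))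
        (iteratedDerivWithin (m + 1) φ (Icc 0 (2 * Real.pi)) x) x := by
    intro m hm x hx
    have := hφ.differentiableOn_iteratedDerivWithin (m := m) (by exact_mod_cast hm) uniq x
      (Ioo_subset_Icc_self hx)
    rw [iteratedDerivWithin_succ]
    exact this.hasDerivWithinAt.hasDerivAt (Icc_mem_nhds hx.1 hx.2)
  have e0 : iteratedDerivWithin 0 φ (Icc 0 (2 * Real.pi)) = φ := iteratedDerivWithin_zero
  have e1 : iteratedDerivWithin 1 φ (Icc 0 (2 * Real.pi))
      = derivWithin φ (Icc 0 (2 * Real.pi)) := by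
    rw [iteratedDerivWithin_succ, e0]
  have c0 := hc 0 (by norm_num)
  have c1 := hc 1 (by norm_num)
  have f0 := hd 0 (by norm_num)
  have f1 := hd 1 (by norm_num)
  simp only [zero_add] at f0
  rw [e0] at c0 f0
  rw [e1] at c1 f0 f1
  exact kdv_gap lam hl φ _ _ _ c0 c1 (hc 2 (by norm_num)) f0 f1 (hd 2 (by norm_num)) hne eqn
    h0 h1 h2
end

section
/- Let L > 0. There exists a constant C > 0 such that for every ε > 0, every T > 0, every y₀, and every classical solution y of the modified KdV system (with cutoff Φ_ε) on [0,T] with y(0,·) = y₀, one has ‖y‖²_{L²(0,T;H₀¹(0,L))} ≤ ((8T + 2L)/3) ‖y₀‖²_{L²(0,L)} + C T ‖y₀‖⁴_{L²(0,L)}. -/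
open Set Real MeasureTheory

/-- The `L²(0,L)` norm of a function on `(0,L)`. -/
noncomputable def L2norm (L : ℝ) (f : ℝ → ℝ) : ℝ :=
  Real.sqrt (∫ x in (0:ℝ)..L, (f x) ^ 2)

/-- A smooth cutoff `Φ ∈ C^∞([0,∞);[0,1])` with `Φ ≡ 1` on `[0,1/2]`, `Φ ≡ 0` on
`[1,∞)` and `Φ′ ≤ 0`.  (The rescaled cutoff is `Φ_ε(r) = Φ(r/ε)`.) -/
def IsCutoff (Φ : ℝ → ℝ) : Prop :=
  ContDiff ℝ (⊤ : ℕ∞) Φ ∧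
  (∀ r ∈ Ici (0:ℝ), Φ r ∈ Icc (0:ℝ) 1) ∧
  (∀ r ∈ Icc (0:ℝ) (1/2 : ℝ), Φ r = 1) ∧
  (∀ r ∈ Ici (1:ℝ), Φ r = 0) ∧
  (∀ r ∈ Ici (0:ℝ), deriv Φ r ≤ 0)

/-- A classical solution of the modified KdV system (with cutoff `Φ_ε = Φ(·/ε)`)
`y_t + y_x + y_xxx + Φ_ε(‖y(t,·)‖_{L²(0,L)}) y y_x = 0`,
`y(t,0) = y(t,L) = y_x(t,L) = 0`, on `[0,T] × [0,L]`. -/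
def IsModifiedKdVSol (L T ε : ℝ) (Φ : ℝ → ℝ) (y : ℝ → ℝ → ℝ) : Prop :=
  (∀ t ∈ Icc (0:ℝ) T, ContDiffOn ℝ 3 (y t) (Icc (0:ℝ) L)) ∧
  (∀ x ∈ Icc (0:ℝ) L, ContDiffOn ℝ 1 (fun s => y s x) (Icc (0:ℝ) T)) ∧
  ContinuousOn (fun p : ℝ × ℝ => y p.1 p.2) (Icc (0:ℝ) T ×ˢ Icc (0:ℝ) L) ∧
  (∀ t ∈ Ioo (0:ℝ) T, ∀ x ∈ Ioo (0:ℝ) L,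
    derivWithin (fun s => y s x) (Icc (0:ℝ) T) t
      + derivWithin (y t) (Icc (0:ℝ) L) x
      + iteratedDerivWithin 3 (y t) (Icc (0:ℝ) L) x
      + Φ (L2norm L (y t) / ε) * (y t x * derivWithin (y t) (Icc (0:ℝ) L) x) = 0) ∧
  (∀ t ∈ Icc (0:ℝ) T,
    y t 0 = 0 ∧ y t L = 0 ∧ derivWithin (y t) (Icc (0:ℝ) L) L = 0)

open Filter Topology

theorem kdv_local_antitone {f : ℝ → ℝ} {a b : ℝ} (hab : a ≤ b)
    (hf : ContinuousOn f (Icc a b))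
    (h : ∀ x ∈ Ioo a b, ∀ᶠ z in 𝓝[>] x, f z ≤ f x) : f b ≤ f a := by
  rcases hab.eq_or_lt with rfl | hab
  · exact le_rfl
  have key : ∀ a' ∈ Ioo a b, f b ≤ f a' := by
    intro a' ha'
    have hsub : Icc a' b ⊆ Icc a b := Icc_subset_Icc_left ha'.1.le
    refine image_le_of_liminf_slope_right_le_deriv_boundary (f := f) (a := a') (b := b)
      (hf.mono hsub) (B := fun _ => f a') (B' := fun _ => 0) le_rfl continuousOn_const
      (fun x _ => hasDerivWithinAt_const _ _ _) ?_ ⟨ha'.2.le, le_rfl⟩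
    intro x hx r hr
    apply Eventually.frequently
    filter_upwards [h x ⟨ha'.1.trans_le hx.1, hx.2⟩, self_mem_nhdsWithin] with z hz hxz
    rw [slope_def_field]
    refine lt_of_le_of_lt ?_ hr
    exact div_nonpos_of_nonpos_of_nonneg (by linarith) (sub_nonneg.2 (le_of_lt hxz))
  have hc : Tendsto f (𝓝[>] a) (𝓝 (f a)) := by
    have := hf a ⟨le_rfl, hab.le⟩
    rw [ContinuousWithinAt] at this
    refine this.mono_left ?_
    rw [← nhdsWithin_Ioo_eq_nhdsGT hab]
    exact nhdsWithin_mono _ Ioo_subset_Icc_self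
  refine ge_of_tendsto hc ?_
  rw [← nhdsWithin_Ioo_eq_nhdsGT hab]
  filter_upwards [self_mem_nhdsWithin] with z hz using key z hz

theorem kdv_gronwall {H : ℝ → ℝ} (hH : Continuous H) {a b K c : ℝ} (hab : a ≤ b)
    (hK : 0 ≤ K) (hc : 0 ≤ c)
    (h : ∀ x ∈ Ioo a b, ∀ᶠ z in 𝓝[>] x, H z - H x ≤ ∫ τ in x..z, (K * H τ + c)) :
    H b ≤ (H a + c * (b - a)) * Real.exp (K * (b - a)) := by
  have hcont : Continuous (fun τ => K * H τ + c) := by fun_prop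
  have hI : ∀ u v : ℝ, IntervalIntegrable (fun τ => K * H τ + c) volume u v :=
    fun u v => hcont.intervalIntegrable u v
  set W : ℝ → ℝ := fun s => H a + ∫ τ in a..s, (K * H τ + c) with hW
  have hWd : ∀ s, HasDerivAt W (K * H s + c) s := by
    intro s
    exact (intervalIntegral.integral_hasDerivAt_right (hI a s)
      (hcont.stronglyMeasurableAtFilter _ _) hcont.continuousAt).const_add _
  have hWc : Continuous W := continuous_iff_continuousAt.2 fun s => (hWd s).continuousAt
  have h1 : ∀ s ∈ Icc a b, H s ≤ W s := by
    intro s hs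
    have := kdv_local_antitone (f := fun s => H s - W s) hs.1 (by fun_prop) (by
      intro x hx
      filter_upwards [h x ⟨hx.1, hx.2.trans_le hs.2⟩] with z hz
      have e : W z - W x = ∫ τ in x..z, (K * H τ + c) := by
        simp only [hW]
        rw [← intervalIntegral.integral_add_adjacent_intervals (hI a x) (hI x z)]
        ring
      linarith)
    have e : W a = H a := by simp [hW]
    linarith
  set φ : ℝ → ℝ := fun s => Real.exp (-(K * (s - a))) * W s - c * (s - a) with hφ
  have hφd : ∀ s, HasDerivAt φ (Real.exp (-(K * (s - a))) * (-K) * W s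
      + Real.exp (-(K * (s - a))) * (K * H s + c) - c) s := by
    intro s
    have e1 : HasDerivAt (fun s : ℝ => -(K * (s - a))) (-K) s := by
      have := (((hasDerivAt_id s).sub_const a).const_mul K).neg
      rw [mul_one] at this
      exact this
    have e2 : HasDerivAt (fun s : ℝ => c * (s - a)) c s := by
      simpa using (((hasDerivAt_id s).sub_const a).const_mul c)
    exact (e1.exp.mul (hWd s)).sub e2
  have hanti : AntitoneOn φ (Icc a b) := by
    apply antitoneOn_of_deriv_nonpos (convex_Icc a b)
    · exact fun s _ => (hφd s).continuousAt.continuousWithinAt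
    · exact fun s _ => (hφd s).differentiableAt.differentiableWithinAt
    · intro s hs
      rw [interior_Icc] at hs
      rw [(hφd s).deriv]
      have h2 := h1 s ⟨hs.1.le, hs.2.le⟩
      have h3 : Real.exp (-(K * (s - a))) ≤ 1 := by
        apply Real.exp_le_one_iff.2
        have := mul_nonneg hK (sub_nonneg.2 hs.1.le)
        linarith
      have h4 := Real.exp_pos (-(K * (s - a)))
      nlinarith [mul_nonneg h4.le (mul_nonneg hK (sub_nonneg.2 h2)),
        mul_nonneg hc (sub_nonneg.2 h3)]
  have h5 := hanti ⟨le_rfl, hab⟩ ⟨hab, le_rfl⟩ hab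
  have e0 : φ a = H a := by simp [hφ, hW]
  rw [e0] at h5
  simp only [hφ] at h5
  have h6 : Real.exp (-(K * (b - a))) * W b ≤ H a + c * (b - a) := by linarith
  calc H b ≤ W b := h1 b ⟨hab, le_rfl⟩
    _ = Real.exp (-(K * (b - a))) * W b * Real.exp (K * (b - a)) := by
        rw [mul_right_comm, ← Real.exp_add]; simp
    _ ≤ _ := by gcongr

/-- spatial profile -/
structure KdvSt (L : ℝ) (u u1 u2 u3 : ℝ → ℝ) : Prop where
  c0 : ContinuousOn u (Icc 0 L)
  c1 : ContinuousOn u1 (Icc 0 L)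
  c2 : ContinuousOn u2 (Icc 0 L)
  c3 : ContinuousOn u3 (Icc 0 L)
  d0 : ∀ x ∈ Ioo 0 L, HasDerivAt u (u1 x) x
  d1 : ∀ x ∈ Ioo 0 L, HasDerivAt u1 (u2 x) x
  d2 : ∀ x ∈ Ioo 0 L, HasDerivAt u2 (u3 x) x
  b0 : u 0 = 0
  bL : u L = 0
  b1 : u1 L = 0

theorem kdv_ii {L : ℝ} (hL : 0 < L) {f : ℝ → ℝ} (hf : ContinuousOn f (Icc 0 L)) :
    IntervalIntegrable f volume 0 L := by
  apply ContinuousOn.intervalIntegrable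
  rwa [uIcc_of_le hL.le]

theorem kdv_alg (z w P R m : ℝ) : (z + P * w) * (2 * R * z + m) ≤
    3 * w ^ 2 - z ^ 2 + ((2 + 2 * R + P ^ 2 * R ^ 2) * z ^ 2 + (1 + P ^ 2) * m ^ 2) := by
  have h1 := sq_nonneg (w - P * R * z)
  have h2 := sq_nonneg (w - P * m / 2)
  have h3 := sq_nonneg (z - m / 2)
  have h4 := sq_nonneg w
  have h5 := sq_nonneg m
  have h6 := sq_nonneg (P * m)
  linarith

set_option maxHeartbeats 1000000 in
theorem kdv_diss {L : ℝ} (hL : 0 < L) {u u1 u2 u3 v v1 v2 v3 gu gv : ℝ → ℝ}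
    (hu : KdvSt L u u1 u2 u3) (hv : KdvSt L v v1 v2 v3) {R κ N c d : ℝ}
    (hR : 0 ≤ R) (hκ : 0 ≤ κ) (hN : 0 ≤ N) (hN2 : N ^ 2 = ∫ x in (0:ℝ)..L, (u x - v x) ^ 2)
    (hc0 : 0 ≤ c) (hc1 : c ≤ 1) (hcd : |c - d| ≤ κ * N)
    (huR : ∀ x ∈ Icc 0 L, |u x| ≤ R) (hvR : ∀ x ∈ Icc 0 L, |v x| ≤ R)
    (hgu : ∀ x ∈ Ioo 0 L, gu x = - u1 x - u3 x - c * (u x * u1 x))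
    (hgv : ∀ x ∈ Ioo 0 L, gv x = - v1 x - v3 x - d * (v x * v1 x)) :
    ∫ x in (0:ℝ)..L, 2 * (1 + x) * (u x - v x) * (gu x - gv x)
      ≤ (2 + 2 * R + (1 + L) ^ 2 * R ^ 2 + L * ((1 + (1 + L) ^ 2) * κ ^ 2 * R ^ 4)) *
        ∫ x in (0:ℝ)..L, (1 + x) * (u x - v x) ^ 2 := by
  obtain ⟨uc0, uc1, uc2, uc3, ud0, ud1, ud2, ub0, ubL, ub1⟩ := hu
  obtain ⟨vc0, vc1, vc2, vc3, vd0, vd1, vd2, vb0, vbL, vb1⟩ := hv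
  set F : ℝ → ℝ := fun x => -((1 + x) * (u x - v x) ^ 2)
    - 2 * ((1 + x) * ((u x - v x) * (u2 x - v2 x))) + 2 * ((u x - v x) * (u1 x - v1 x))
    + (1 + x) * (u1 x - v1 x) ^ 2 - (1 + x) * ((u x - v x) * (c * u x ^ 2 - d * v x ^ 2)) with hF
  set F' : ℝ → ℝ := fun x =>
    2 * (1 + x) * (u x - v x) *
      (-(u1 x - v1 x) - (u3 x - v3 x) - (c * (u x * u1 x) - d * (v x * v1 x)))
    + 3 * (u1 x - v1 x) ^ 2 - (u x - v x) ^ 2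
    - ((u x - v x) + (1 + x) * (u1 x - v1 x)) * (c * u x ^ 2 - d * v x ^ 2) with hF'
  have hFc : ContinuousOn F (Icc 0 L) := by simp only [hF]; fun_prop
  have hF'c : ContinuousOn F' (Icc 0 L) := by simp only [hF']; fun_prop
  have hFd : ∀ x ∈ Ioo 0 L, HasDerivAt F (F' x) x := by
    intro x hx
    have p : HasDerivAt (fun x : ℝ => 1 + x) 1 x := by
      simpa using (hasDerivAt_id x).const_add 1
    have z0 := (ud0 x hx).sub (vd0 x hx)
    have z1 := (ud1 x hx).sub (vd1 x hx)
    have z2 := (ud2 x hx).sub (vd2 x hx)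
    have q := (((ud0 x hx).pow 2).const_mul c).sub (((vd0 x hx).pow 2).const_mul d)
    have := (((((p.mul (z0.pow 2)).neg).sub ((p.mul (z0.mul z2)).const_mul 2)).add
      ((z0.mul z1).const_mul 2)).add (p.mul (z1.pow 2))).sub (p.mul (z0.mul q))
    refine this.congr_deriv ?_
    simp only [hF', Pi.sub_apply, Pi.mul_apply, Pi.pow_apply]
    push_cast
    ring
  have hFint := intervalIntegral.integral_eq_sub_of_hasDerivAt_of_le hL.le hFc hFd (kdv_ii hL hF'c)
  have hF0 : 0 ≤ F 0 := by simp only [hF, ub0, vb0]; norm_num; positivity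
  have hFL : F L = 0 := by simp only [hF, ubL, vbL, ub1, vb1]; norm_num
  have hle : ∫ x in (0:ℝ)..L, F' x ≤ 0 := by rw [hFint, hFL]; linarith
  have hpt : ∀ x ∈ Ioo 0 L, 2 * (1 + x) * (u x - v x) * (gu x - gv x) ≤
      F' x + ((2 + 2 * R + (1 + L) ^ 2 * R ^ 2) * (u x - v x) ^ 2
        + (1 + (1 + L) ^ 2) * κ ^ 2 * R ^ 4 * N ^ 2) := by
    intro x hx
    rw [hgu x hx, hgv x hx]
    have hx' : x ∈ Icc 0 L := ⟨hx.1.le, hx.2.le⟩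
    have hux := huR x hx'
    have hvx := hvR x hx'
    have e : c * u x ^ 2 - d * v x ^ 2 = c * (u x + v x) * (u x - v x) + (c - d) * v x ^ 2 := by
      ring
    have hq : |c * u x ^ 2 - d * v x ^ 2| ≤ 2 * R * |u x - v x| + κ * N * R ^ 2 := by
      rw [e]
      refine (abs_add_le _ _).trans ?_
      rw [abs_mul, abs_mul, abs_mul, abs_of_nonneg hc0, abs_of_nonneg (sq_nonneg (v x))]
      have h1 : c * |u x + v x| ≤ 2 * R := by
        have := abs_add_le (u x) (v x)
        nlinarith [abs_nonneg (u x + v x)]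
      have h2 : v x ^ 2 ≤ R ^ 2 := by
        rw [← sq_abs (v x)]; gcongr
      gcongr
    have hr : |(u x - v x) + (1 + x) * (u1 x - v1 x)| ≤
        |u x - v x| + (1 + L) * |u1 x - v1 x| := by
      refine (abs_add_le _ _).trans ?_
      rw [abs_mul, abs_of_pos (by linarith [hx.1] : 0 < 1 + x)]
      have := hx.2.le
      gcongr
    have hprod : ((u x - v x) + (1 + x) * (u1 x - v1 x)) * (c * u x ^ 2 - d * v x ^ 2) ≤
        (|u x - v x| + (1 + L) * |u1 x - v1 x|) * (2 * R * |u x - v x| + κ * N * R ^ 2) := by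
      refine (le_abs_self _).trans ?_
      rw [abs_mul]
      gcongr
    have halg := kdv_alg |u x - v x| |u1 x - v1 x| (1 + L) R (κ * N * R ^ 2)
    rw [sq_abs, sq_abs] at halg
    simp only [hF']
    have e2 : (1 + (1 + L) ^ 2) * κ ^ 2 * R ^ 4 * N ^ 2 =
      (1 + (1 + L) ^ 2) * (κ * N * R ^ 2) ^ 2 := by ring
    have e3 : 2 * (1 + x) * (u x - v x) *
        (-u1 x - u3 x - c * (u x * u1 x) - (-v1 x - v3 x - d * (v x * v1 x))) =
      2 * (1 + x) * (u x - v x) *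
      (-(u1 x - v1 x) - (u3 x - v3 x) - (c * (u x * u1 x) - d * (v x * v1 x))) := by ring
    rw [e2, e3]
    linarith
  have hz2 : ContinuousOn (fun x => (u x - v x) ^ 2) (Icc 0 L) := by fun_prop
  have hpz2 : ContinuousOn (fun x => (1 + x) * (u x - v x) ^ 2) (Icc 0 L) := by fun_prop
  have hzz : N ^ 2 ≤ ∫ x in (0:ℝ)..L, (1 + x) * (u x - v x) ^ 2 := by
    rw [hN2]
    apply intervalIntegral.integral_mono_on hL.le (kdv_ii hL hz2) (kdv_ii hL hpz2)
    intro x hx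
    nlinarith [sq_nonneg (u x - v x), hx.1]
  have hlhs : IntervalIntegrable
      (fun x => 2 * (1 + x) * (u x - v x) * (gu x - gv x)) volume 0 L := by
    have : IntervalIntegrable (fun x => 2 * (1 + x) * (u x - v x) *
      ((- u1 x - u3 x - c * (u x * u1 x)) - (- v1 x - v3 x - d * (v x * v1 x)))) volume 0 L :=
      kdv_ii hL (by fun_prop)
    refine this.congr_uIoo ?_
    rw [uIoo_of_le hL.le]
    intro x hx
    simp only [hgu x hx, hgv x hx]
  have hm := intervalIntegral.integral_mono_on_of_le_Ioo hL.le hlhs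
    (kdv_ii hL (by fun_prop)) hpt
  refine hm.trans ?_
  rw [intervalIntegral.integral_add (kdv_ii hL hF'c) (kdv_ii hL (by fun_prop)),
    intervalIntegral.integral_add (kdv_ii hL (by fun_prop)) (kdv_ii hL (by fun_prop)),
    intervalIntegral.integral_const_mul, ← hN2, intervalIntegral.integral_const, smul_eq_mul,
    sub_zero]
  set K1 := 2 + 2 * R + (1 + L) ^ 2 * R ^ 2 with hK1
  set K2 := (1 + (1 + L) ^ 2) * κ ^ 2 * R ^ 4 with hK2
  have hK1p : 0 ≤ K1 := by positivity
  have hK2p : 0 ≤ K2 := by positivity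
  calc _ ≤ (K1 + L * K2) * N ^ 2 := by linarith
    _ ≤ _ := by gcongr
theorem kdv_fubini {L : ℝ} (hL : 0 < L) {t1 t2 : ℝ} (h12 : t1 ≤ t2) {Y Yt : ℝ → ℝ → ℝ}
    (hY : Continuous (Function.uncurry Y)) (hYt : Measurable (Function.uncurry Yt))
    (hd : ∀ s ∈ Icc t1 t2, ∀ x ∈ Icc 0 L, HasDerivAt (fun s => Y s x) (Yt s x) s)
    (hc : ∀ x ∈ Icc 0 L, ContinuousOn (fun s => Yt s x) (Icc t1 t2))
    (hi : ∀ s ∈ Icc t1 t2, IntervalIntegrable (fun x => Yt s x ^ 2) volume 0 L) {K : ℝ}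
    (hK : ∀ s ∈ Icc t1 t2, ∫ x in (0:ℝ)..L, Yt s x ^ 2 ≤ K) {p : ℝ → ℝ} (hp : Continuous p) :
    IntervalIntegrable (fun s => ∫ x in (0:ℝ)..L, 2 * p x * Y s x * Yt s x) volume t1 t2 ∧
    (∫ x in (0:ℝ)..L, p x * Y t2 x ^ 2) - (∫ x in (0:ℝ)..L, p x * Y t1 x ^ 2) =
      ∫ s in t1..t2, ∫ x in (0:ℝ)..L, 2 * p x * Y s x * Yt s x := by
  set μ : Measure ℝ := volume.restrict (Ioc t1 t2) with hμ
  set ν : Measure ℝ := volume.restrict (Ioc 0 L) with hν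
  have hm2 : Measurable (fun q : ℝ × ℝ => Yt q.1 q.2 ^ 2) := hYt.pow_const 2
  have hsq : Integrable (fun q : ℝ × ℝ => Yt q.1 q.2 ^ 2) (μ.prod ν) := by
    rw [integrable_prod_iff hm2.aestronglyMeasurable]
    constructor
    · refine (ae_restrict_iff' measurableSet_Ioc).2 (Eventually.of_forall fun s hs => ?_)
      exact (intervalIntegrable_iff_integrableOn_Ioc_of_le hL.le).1 (hi s ⟨hs.1.le, hs.2⟩)
    · refine Measure.integrableOn_of_bounded (s := Ioc t1 t2) (M := K) (by simp) ?_ ?_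
      · exact (hm2.norm.stronglyMeasurable.integral_prod_right').aestronglyMeasurable
      · refine (ae_restrict_iff' measurableSet_Ioc).2 (Eventually.of_forall fun s hs => ?_)
        have h1 := hK s ⟨hs.1.le, hs.2⟩
        rw [intervalIntegral.integral_of_le hL.le] at h1
        rw [Real.norm_of_nonneg (integral_nonneg fun x => norm_nonneg _)]
        refine le_trans (le_of_eq ?_) h1
        refine integral_congr_ae (Eventually.of_forall fun x => ?_)
        simp
  have hYi : Integrable (fun q : ℝ × ℝ => Yt q.1 q.2) (μ.prod ν) := by
    refine Integrable.mono' ((integrable_const (1:ℝ)).add hsq) hYt.aestronglyMeasurable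
      (Eventually.of_forall fun q => ?_)
    simp only [Pi.add_apply, Real.norm_eq_abs]
    rw [← sq_abs (Yt q.1 q.2)]
    nlinarith [sq_nonneg (|Yt q.1 q.2| - 1), abs_nonneg (Yt q.1 q.2)]
  have hcont : Continuous (fun q : ℝ × ℝ => 2 * p q.2 * Y q.1 q.2) := by
    have : Continuous (fun q : ℝ × ℝ => Y q.1 q.2) := hY
    fun_prop
  obtain ⟨B, hB⟩ := (isCompact_Icc.prod isCompact_Icc : IsCompact (Icc t1 t2 ×ˢ Icc 0 L)).exists_bound_of_continuousOn hcont.continuousOn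
  have hFint : Integrable (fun q : ℝ × ℝ => 2 * p q.2 * Y q.1 q.2 * Yt q.1 q.2) (μ.prod ν) := by
    refine hYi.bdd_mul (c := B) hcont.aestronglyMeasurable ?_
    rw [hμ, hν, Measure.prod_restrict]
    refine (ae_restrict_iff' (measurableSet_Ioc.prod measurableSet_Ioc)).2
      (Eventually.of_forall fun q hq => ?_)
    exact hB q ⟨⟨hq.1.1.le, hq.1.2⟩, ⟨hq.2.1.le, hq.2.2⟩⟩
  have hI1 : IntervalIntegrable (fun s => ∫ x in (0:ℝ)..L, 2 * p x * Y s x * Yt s x) volume t1 t2 := by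
    rw [intervalIntegrable_iff_integrableOn_Ioc_of_le h12]
    simp only [intervalIntegral.integral_of_le hL.le]
    exact hFint.integral_prod_left
  refine ⟨hI1, ?_⟩
  have hswap : ∫ s in t1..t2, ∫ x in (0:ℝ)..L, 2 * p x * Y s x * Yt s x =
      ∫ x in (0:ℝ)..L, ∫ s in t1..t2, 2 * p x * Y s x * Yt s x := by
    simp only [intervalIntegral.integral_of_le hL.le, intervalIntegral.integral_of_le h12]
    exact integral_integral_swap hFint
  have hYc : ∀ t, Continuous (fun x => Y t x) := fun t => by
    exact hY.comp (by fun_prop : Continuous fun x : ℝ => (t, x))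
  have hYc' : ∀ x, Continuous (fun t => Y t x) := fun x => by
    exact hY.comp (by fun_prop : Continuous fun t : ℝ => (t, x))
  have hii : ∀ t, IntervalIntegrable (fun x => p x * Y t x ^ 2) volume 0 L := fun t =>
    (hp.mul ((hYc t).pow 2)).intervalIntegrable _ _
  rw [hswap, ← intervalIntegral.integral_sub (hii t2) (hii t1)]
  apply intervalIntegral.integral_congr
  intro x hx
  rw [uIcc_of_le hL.le] at hx
  have := intervalIntegral.integral_eq_sub_of_hasDerivAt (a := t1) (b := t2)
    (f := fun s => p x * Y s x ^ 2) (f' := fun s => 2 * p x * Y s x * Yt s x) ?_ ?_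
  · simp only [this]
  · intro s hs
    rw [uIcc_of_le h12] at hs
    refine (((hd s hs x hx).pow 2).const_mul (p x)).congr_deriv ?_
    simp only [Nat.add_one_sub_one, pow_one]; push_cast; ring
  · apply ContinuousOn.intervalIntegrable
    rw [uIcc_of_le h12]
    exact (((hYc' x).const_mul (2 * p x)).continuousOn).mul (hc x hx)

theorem kdv_cs {L : ℝ} (hL : 0 < L) {f g : ℝ → ℝ} (hf : ContinuousOn f (Icc 0 L))
    (hg : ContinuousOn g (Icc 0 L)) :
    (∫ x in (0:ℝ)..L, f x * g x) ^ 2 ≤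
      (∫ x in (0:ℝ)..L, f x ^ 2) * ∫ x in (0:ℝ)..L, g x ^ 2 := by
  have h : ∀ r : ℝ, 0 ≤ (∫ x in (0:ℝ)..L, g x ^ 2) * (r * r)
      + (2 * ∫ x in (0:ℝ)..L, f x * g x) * r + ∫ x in (0:ℝ)..L, f x ^ 2 := by
    intro r
    have h0 : 0 ≤ ∫ x in (0:ℝ)..L, (r * r * g x ^ 2 + 2 * r * (f x * g x) + f x ^ 2) := by
      apply intervalIntegral.integral_nonneg hL.le
      intro x _
      nlinarith [sq_nonneg (r * g x + f x)]
    rw [intervalIntegral.integral_add (kdv_ii hL (by fun_prop)) (kdv_ii hL (by fun_prop)),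
      intervalIntegral.integral_add (kdv_ii hL (by fun_prop)) (kdv_ii hL (by fun_prop)),
      intervalIntegral.integral_const_mul, intervalIntegral.integral_const_mul] at h0
    linarith
  have := discrim_le_zero h
  rw [discrim] at this
  linarith

/-- reverse triangle inequality -/
theorem kdv_tri {L : ℝ} (hL : 0 < L) {f g : ℝ → ℝ} (hf : ContinuousOn f (Icc 0 L))
    (hg : ContinuousOn g (Icc 0 L)) :
    |L2norm L f - L2norm L g| ≤ Real.sqrt (∫ x in (0:ℝ)..L, (f x - g x) ^ 2) := by
  have hA : 0 ≤ ∫ x in (0:ℝ)..L, f x ^ 2 :=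
    intervalIntegral.integral_nonneg hL.le fun x _ => sq_nonneg _
  have hB : 0 ≤ ∫ x in (0:ℝ)..L, g x ^ 2 :=
    intervalIntegral.integral_nonneg hL.le fun x _ => sq_nonneg _
  apply Real.le_sqrt_of_sq_le
  rw [sq_abs]
  have e : ∫ x in (0:ℝ)..L, (f x - g x) ^ 2 = (∫ x in (0:ℝ)..L, f x ^ 2)
      - 2 * (∫ x in (0:ℝ)..L, f x * g x) + ∫ x in (0:ℝ)..L, g x ^ 2 := by
    have : ∀ x, (f x - g x) ^ 2 = f x ^ 2 - 2 * (f x * g x) + g x ^ 2 := fun x => by ring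
    simp only [this]
    rw [intervalIntegral.integral_add (kdv_ii hL (by fun_prop)) (kdv_ii hL (by fun_prop)),
      intervalIntegral.integral_sub (kdv_ii hL (by fun_prop)) (kdv_ii hL (by fun_prop)),
      intervalIntegral.integral_const_mul]
  rw [e]
  have h1 : (∫ x in (0:ℝ)..L, f x * g x) ≤ L2norm L f * L2norm L g := by
    rw [L2norm, L2norm, ← Real.sqrt_mul hA]
    exact Real.le_sqrt_of_sq_le (kdv_cs hL hf hg)
  have h2 : L2norm L f ^ 2 = ∫ x in (0:ℝ)..L, f x ^ 2 := Real.sq_sqrt hA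
  have h3 : L2norm L g ^ 2 = ∫ x in (0:ℝ)..L, g x ^ 2 := Real.sq_sqrt hB
  rw [← h2, ← h3]
  nlinarith
/-- regularised description of a solution -/
structure KdvSol (L T κ R : ℝ) (y g u1 u2 u3 : ℝ → ℝ → ℝ) (c : ℝ → ℝ) : Prop where
  hL : 0 < L
  hT : 0 < T
  hκ : 0 ≤ κ
  hR : 0 ≤ R
  cont : Continuous (Function.uncurry y)
  bdd : ∀ t x, |y t x| ≤ R
  gm : Measurable (Function.uncurry g)
  gd : ∀ t ∈ Ioo 0 T, ∀ x ∈ Icc 0 L, HasDerivAt (fun s => y s x) (g t x) t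
  gc : ∀ x ∈ Icc 0 L, ContinuousOn (fun s => g s x) (Ioo 0 T)
  st : ∀ t ∈ Ioo 0 T, KdvSt L (y t) (u1 t) (u2 t) (u3 t)
  pde : ∀ t ∈ Ioo 0 T, ∀ x ∈ Ioo 0 L, g t x = - u1 t x - u3 t x - c t * (y t x * u1 t x)
  c0 : ∀ t, 0 ≤ c t
  c1 : ∀ t, c t ≤ 1
  clip : ∀ s t, |c s - c t| ≤ κ * Real.sqrt (∫ x in (0:ℝ)..L, (y s x - y t x) ^ 2)

def KdvGood (L T : ℝ) (g : ℝ → ℝ → ℝ) (t : ℝ) : Prop :=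
  ∃ K, ∀ᶠ s in 𝓝 t, s ∈ Ioo 0 T ∧ ∫ x in (0:ℝ)..L, g s x ^ 2 ≤ K

noncomputable def kdvK (L κ R : ℝ) : ℝ :=
  2 + 2 * R + (1 + L) ^ 2 * R ^ 2 + L * ((1 + (1 + L) ^ 2) * κ ^ 2 * R ^ 4)

section sol
variable {L T κ R : ℝ} {y g u1 u2 u3 : ℝ → ℝ → ℝ} {c : ℝ → ℝ}

theorem KdvSol.K_nonneg (h : KdvSol L T κ R y g u1 u2 u3 c) : 0 ≤ kdvK L κ R := by
  have h1 := h.hL; have h2 := h.hκ; have h3 := h.hR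
  unfold kdvK; positivity

theorem KdvSol.contx (h : KdvSol L T κ R y g u1 u2 u3 c) (t : ℝ) : Continuous (y t) :=
  h.cont.comp (by fun_prop : Continuous fun x : ℝ => (t, x))

theorem KdvSol.gi (h : KdvSol L T κ R y g u1 u2 u3 c) {t : ℝ} (ht : t ∈ Ioo 0 T) {f : ℝ → ℝ}
    (hf : ContinuousOn f (Icc 0 L)) : IntervalIntegrable (fun x => f x * g t x) volume 0 L := by
  obtain ⟨uc0, uc1, uc2, uc3, -⟩ := h.st t ht
  have : IntervalIntegrable (fun x => f x * (- u1 t x - u3 t x - c t * (y t x * u1 t x)))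
    volume 0 L := kdv_ii h.hL (by fun_prop)
  refine this.congr_uIoo ?_
  rw [uIoo_of_le h.hL.le]
  intro x hx
  simp only [h.pde t ht x hx]

theorem KdvSol.gi2 (h : KdvSol L T κ R y g u1 u2 u3 c) {s t : ℝ} (hs : s ∈ Ioo 0 T)
    (ht : t ∈ Ioo 0 T) {f : ℝ → ℝ} (hf : ContinuousOn f (Icc 0 L)) :
    IntervalIntegrable (fun x => f x * (g s x * g t x)) volume 0 L := by
  obtain ⟨uc0, uc1, uc2, uc3, -⟩ := h.st t ht
  obtain ⟨vc0, vc1, vc2, vc3, -⟩ := h.st s hs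
  have : IntervalIntegrable (fun x => f x * ((- u1 s x - u3 s x - c s * (y s x * u1 s x)) *
      (- u1 t x - u3 t x - c t * (y t x * u1 t x))))
    volume 0 L := kdv_ii h.hL (by fun_prop)
  refine this.congr_uIoo ?_
  rw [uIoo_of_le h.hL.le]
  intro x hx
  simp only [h.pde t ht x hx, h.pde s hs x hx]

theorem KdvSol.gsq (h : KdvSol L T κ R y g u1 u2 u3 c) {t : ℝ} (ht : t ∈ Ioo 0 T) :
    IntervalIntegrable (fun x => g t x ^ 2) volume 0 L := by
  have := h.gi2 ht ht (continuousOn_const (c := (1:ℝ)))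
  simpa [sq] using this

theorem KdvSol.bounded (h : KdvSol L T κ R y g u1 u2 u3 c) {t : ℝ} (ht : t ∈ Ioo 0 T) :
    ∃ n : ℕ, ∀ x ∈ Ioo 0 L, |g t x| ≤ n := by
  obtain ⟨uc0, uc1, uc2, uc3, -⟩ := h.st t ht
  have : ContinuousOn (fun x => - u1 t x - u3 t x - c t * (y t x * u1 t x)) (Icc 0 L) := by
    fun_prop
  obtain ⟨B, hB⟩ := isCompact_Icc.exists_bound_of_continuousOn this
  obtain ⟨n, hn⟩ := exists_nat_ge B
  refine ⟨n, fun x hx => ?_⟩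
  rw [h.pde t ht x hx]
  exact (hB x ⟨hx.1.le, hx.2.le⟩).trans hn

theorem KdvSol.diss (h : KdvSol L T κ R y g u1 u2 u3 c) {s t : ℝ} (hs : s ∈ Ioo 0 T)
    (ht : t ∈ Ioo 0 T) :
    ∫ x in (0:ℝ)..L, 2 * (1 + x) * (y s x - y t x) * (g s x - g t x) ≤
      kdvK L κ R * ∫ x in (0:ℝ)..L, (1 + x) * (y s x - y t x) ^ 2 :=
  kdv_diss h.hL (h.st s hs) (h.st t ht) h.hR h.hκ (Real.sqrt_nonneg _)
    (Real.sq_sqrt (intervalIntegral.integral_nonneg h.hL.le fun x _ => sq_nonneg _))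
    (h.c0 s) (h.c1 s) (h.clip s t) (fun _ _ => h.bdd s _) (fun _ _ => h.bdd t _)
    (h.pde s hs) (h.pde t ht)

theorem KdvGood.ev {x : ℝ} (hx : KdvGood L T g x) : ∃ K, ∀ᶠ z in 𝓝[>] x, x < z ∧
    ∀ s ∈ Icc x z, s ∈ Ioo 0 T ∧ ∫ x in (0:ℝ)..L, g s x ^ 2 ≤ K := by
  obtain ⟨K, hK⟩ := hx
  refine ⟨K, ?_⟩
  obtain ⟨δ, hδ, hb⟩ := Metric.eventually_nhds_iff.1 hK
  filter_upwards [Ioo_mem_nhdsGT (show x < x + δ by linarith)] with z hz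
  refine ⟨hz.1, fun s hs => hb ?_⟩
  rw [Real.dist_eq, abs_of_nonneg (by linarith [hs.1])]
  linarith [hs.2, hz.2]

theorem KdvSol.evo (h : KdvSol L T κ R y g u1 u2 u3 c) {x : ℝ} (hx : KdvGood L T g x)
    {v p : ℝ → ℝ} (hv : Continuous v) (hp : Continuous p) :
    ∀ᶠ z in 𝓝[>] x, x < z ∧ (∀ s ∈ Icc x z, s ∈ Ioo 0 T) ∧
      IntervalIntegrable (fun s => ∫ r in (0:ℝ)..L, 2 * p r * (y s r - v r) * g s r) volume x z ∧
      (∫ r in (0:ℝ)..L, p r * (y z r - v r) ^ 2) - (∫ r in (0:ℝ)..L, p r * (y x r - v r) ^ 2) =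
      ∫ s in x..z, ∫ r in (0:ℝ)..L, 2 * p r * (y s r - v r) * g s r := by
  obtain ⟨K, hK⟩ := hx.ev
  filter_upwards [hK] with z hz
  obtain ⟨hxz, hz⟩ := hz
  refine ⟨hxz, fun s hs => (hz s hs).1, ?_⟩
  have hc := h.cont
  refine kdv_fubini h.hL hxz.le (Y := fun s r => y s r - v r) (Yt := g) ?_ h.gm ?_ ?_ ?_
    (fun s hs => (hz s hs).2) hp
  · have : Continuous (fun q : ℝ × ℝ => y q.1 q.2) := h.cont
    exact this.sub (hv.comp continuous_snd)
  · intro s hs r hr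
    exact (h.gd s (hz s hs).1 r hr).sub_const _
  · intro r hr
    exact (h.gc r hr).mono fun s hs => (hz s hs).1
  · intro s hs
    exact h.gsq (hz s hs).1

theorem KdvSol.evo2 (h : KdvSol L T κ R y g u1 u2 u3 c) {x d : ℝ} (hx : KdvGood L T g x)
    (hxd : KdvGood L T g (x + d)) {p : ℝ → ℝ} (hp : Continuous p) :
    ∀ᶠ z in 𝓝[>] x, x < z ∧ (∀ s ∈ Icc x z, s ∈ Ioo 0 T ∧ s + d ∈ Ioo 0 T) ∧
      IntervalIntegrable (fun s => ∫ r in (0:ℝ)..L, 2 * p r * (y (s + d) r - y s r) *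
        (g (s + d) r - g s r)) volume x z ∧
      (∫ r in (0:ℝ)..L, p r * (y (z + d) r - y z r) ^ 2)
        - (∫ r in (0:ℝ)..L, p r * (y (x + d) r - y x r) ^ 2) =
      ∫ s in x..z, ∫ r in (0:ℝ)..L, 2 * p r * (y (s + d) r - y s r) * (g (s + d) r - g s r) := by
  obtain ⟨K, hK⟩ := hx.ev
  obtain ⟨K', hK'⟩ := hxd.ev
  have htend : Tendsto (fun z => z + d) (𝓝[>] x) (𝓝[>] (x + d)) := by
    refine tendsto_nhdsWithin_iff.2 ⟨?_, ?_⟩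
    · exact ((continuous_add_const d).tendsto x).mono_left nhdsWithin_le_nhds
    · filter_upwards [self_mem_nhdsWithin] with z hz
      exact add_lt_add_left hz d
  filter_upwards [hK, htend.eventually hK'] with z hz hz'
  obtain ⟨hxz, hz⟩ := hz
  have hz'' : ∀ s ∈ Icc x z, s + d ∈ Ioo 0 T ∧ ∫ x in (0:ℝ)..L, g (s + d) x ^ 2 ≤ K' :=
    fun s hs => hz'.2 (s + d) ⟨by linarith [hs.1], by linarith [hs.2]⟩
  refine ⟨hxz, fun s hs => ⟨(hz s hs).1, (hz'' s hs).1⟩, ?_⟩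
  have hsq : ∀ s ∈ Icc x z, IntervalIntegrable (fun r => (g (s + d) r - g s r) ^ 2) volume 0 L := by
    intro s hs
    have i1 := h.gsq (hz'' s hs).1
    have i2 := h.gsq (hz s hs).1
    have i3 := h.gi2 (hz'' s hs).1 (hz s hs).1 (continuousOn_const (c := (2:ℝ)))
    refine ((i1.sub i3).add i2).congr ?_
    intro r _
    simp only
    ring
  refine kdv_fubini h.hL hxz.le (Y := fun s r => y (s + d) r - y s r)
    (Yt := fun s r => g (s + d) r - g s r) (K := 2 * K' + 2 * K) ?_ ?_ ?_ ?_ hsq ?_ hp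
  · have : Continuous (fun q : ℝ × ℝ => y q.1 q.2) := h.cont
    exact (this.comp (by fun_prop : Continuous fun q : ℝ × ℝ => (q.1 + d, q.2))).sub this
  · have : Measurable (fun q : ℝ × ℝ => g q.1 q.2) := h.gm
    exact (this.comp (by fun_prop : Measurable fun q : ℝ × ℝ => (q.1 + d, q.2))).sub this
  · intro s hs r hr
    exact ((h.gd _ (hz'' s hs).1 r hr).comp_add_const s d).sub (h.gd s (hz s hs).1 r hr)
  · intro r hr
    refine ContinuousOn.sub ?_ ((h.gc r hr).mono fun s hs => (hz s hs).1)
    exact (h.gc r hr).comp (by fun_prop : ContinuousOn (fun s => s + d) (Icc x z))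
      fun s hs => (hz'' s hs).1
  · intro s hs
    have i1 := h.gsq (hz'' s hs).1
    have i2 := h.gsq (hz s hs).1
    have := intervalIntegral.integral_mono_on h.hL.le (hsq s hs)
      ((i1.const_mul 2).add (i2.const_mul 2)) (fun r _ => by
        nlinarith [sq_nonneg (g (s + d) r + g s r)])
    rw [intervalIntegral.integral_add (i1.const_mul 2) (i2.const_mul 2),
      intervalIntegral.integral_const_mul, intervalIntegral.integral_const_mul] at this
    have h1 := (hz'' s hs).2
    have h2 := (hz s hs).2
    linarith

theorem kdv_contH {L : ℝ} {Y : ℝ → ℝ → ℝ} (hY : Continuous (Function.uncurry Y)) {p : ℝ → ℝ}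
    (hp : Continuous p) : Continuous (fun s => ∫ r in (0:ℝ)..L, p r * Y s r ^ 2) := by
  apply intervalIntegral.continuous_parametric_intervalIntegral_of_continuous'
  have : Continuous (fun q : ℝ × ℝ => Y q.1 q.2) := hY
  exact (hp.comp continuous_snd).mul (this.pow 2)

theorem KdvSol.step1 (h : KdvSol L T κ R y g u1 u2 u3 c) {a d n : ℝ} (ha : a ∈ Ioo 0 T)
    (hd : 0 < d) (hdT : d ≤ T) (hG : ∀ s ∈ Ioo a (a + d), KdvGood L T g s)
    (hn : ∫ x in (0:ℝ)..L, g a x ^ 2 ≤ n) :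
    ∫ r in (0:ℝ)..L, (1 + r) * (y (a + d) r - y a r) ^ 2 ≤
      d ^ 2 * ((1 + L) * n * Real.exp (kdvK L κ R * T + 1)) := by
  have hL := h.hL
  have hn0 : 0 ≤ n := le_trans
    (intervalIntegral.integral_nonneg hL.le fun x _ => sq_nonneg _) hn
  have hK := h.K_nonneg
  have hya := h.contx a
  have hyc : Continuous (fun q : ℝ × ℝ => y q.1 q.2) := h.cont
  set H : ℝ → ℝ := fun s => ∫ r in (0:ℝ)..L, (1 + r) * (y s r - y a r) ^ 2 with hH
  have hHc : Continuous H := kdv_contH (Y := fun s r => y s r - y a r)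
    (hyc.sub (hya.comp continuous_snd)) (by fun_prop)
  have hHa : H a = 0 := by simp [hH]
  have hbd : ∀ s ∈ Ioo 0 T, ∫ r in (0:ℝ)..L, 2 * (1 + r) * (y s r - y a r) * g s r ≤
      (kdvK L κ R + 1 / d) * H s + d * ((1 + L) * n) := by
    intro s hs
    have hys := h.contx s
    have hD := h.diss hs ha
    have i1 : IntervalIntegrable (fun r => 2 * (1 + r) * (y s r - y a r) * g s r) volume 0 L :=
      h.gi hs (by fun_prop)
    have i2 : IntervalIntegrable (fun r => 2 * (1 + r) * (y s r - y a r) * g a r) volume 0 L :=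
      h.gi ha (by fun_prop)
    have i3 : IntervalIntegrable (fun r => (1 + r) * (y s r - y a r) ^ 2) volume 0 L :=
      Continuous.intervalIntegrable (by fun_prop) _ _
    have i4 := h.gsq ha
    have e1 : ∫ r in (0:ℝ)..L, 2 * (1 + r) * (y s r - y a r) * (g s r - g a r) =
        (∫ r in (0:ℝ)..L, 2 * (1 + r) * (y s r - y a r) * g s r) -
        ∫ r in (0:ℝ)..L, 2 * (1 + r) * (y s r - y a r) * g a r := by
      rw [← intervalIntegral.integral_sub i1 i2]
      congr 1; ext r; ring
    have e2 : ∫ r in (0:ℝ)..L, 2 * (1 + r) * (y s r - y a r) * g a r ≤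
        1 / d * H s + d * (1 + L) * ∫ r in (0:ℝ)..L, g a r ^ 2 := by
      rw [hH, ← intervalIntegral.integral_const_mul, ← intervalIntegral.integral_const_mul,
        ← intervalIntegral.integral_add (i3.const_mul _) (i4.const_mul _)]
      refine intervalIntegral.integral_mono_on hL.le i2 ((i3.const_mul _).add (i4.const_mul _)) ?_
      intro r hr
      have hy : 2 * (y s r - y a r) * g a r ≤ 1 / d * (y s r - y a r) ^ 2 + d * g a r ^ 2 := by
        have := sq_nonneg ((y s r - y a r) - d * g a r)
        have e : 1 / d * (y s r - y a r) ^ 2 + d * g a r ^ 2 - 2 * (y s r - y a r) * g a r =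
          1 / d * ((y s r - y a r) - d * g a r) ^ 2 := by field_simp; ring
        have : 0 ≤ 1 / d * ((y s r - y a r) - d * g a r) ^ 2 := by positivity
        linarith
      have h1 := mul_le_mul_of_nonneg_left hy (by linarith [hr.1] : 0 ≤ 1 + r)
      have h2 : 0 ≤ (L - r) * (d * g a r ^ 2) := by
        have := sub_nonneg.2 hr.2
        positivity
      linarith
    have e3 : d * (1 + L) * ∫ r in (0:ℝ)..L, g a r ^ 2 ≤ d * (1 + L) * n := by gcongr
    simp only [hH] at *
    linarith
  have := kdv_gronwall hHc (a := a) (b := a + d) (K := kdvK L κ R + 1 / d) (c := d * ((1 + L) * n))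
    (by linarith) (by positivity) (by positivity) (by
      intro x hx
      filter_upwards [h.evo (hG x hx) hya (by fun_prop : Continuous fun r : ℝ => 1 + r)] with z hz
      obtain ⟨hxz, hzs, hzi, hze⟩ := hz
      simp only [hH]
      rw [hze]
      exact intervalIntegral.integral_mono_on hxz.le hzi
        (Continuous.intervalIntegrable (by fun_prop) _ _) fun s hs => hbd s (hzs s hs))
  rw [hHa] at this
  have e : (kdvK L κ R + 1 / d) * (a + d - a) = kdvK L κ R * d + 1 := by field_simp; ring
  rw [e] at this
  calc _ ≤ _ := this
    _ = d ^ 2 * ((1 + L) * n * Real.exp (kdvK L κ R * d + 1)) := by ring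
    _ ≤ _ := by gcongr

theorem KdvSol.step2 (h : KdvSol L T κ R y g u1 u2 u3 c) {a t d : ℝ} (ha : a ∈ Ioo 0 T)
    (hat : a < t) (htT : t < T)
    (hd : 0 < d) (hG : ∀ s ∈ Ioo a (t + d), KdvGood L T g s) :
    ∫ r in (0:ℝ)..L, (1 + r) * (y (t + d) r - y t r) ^ 2 ≤
      (∫ r in (0:ℝ)..L, (1 + r) * (y (a + d) r - y a r) ^ 2) * Real.exp (kdvK L κ R * T) := by
  have hL := h.hL
  have hK := h.K_nonneg
  have hyc : Continuous (fun q : ℝ × ℝ => y q.1 q.2) := h.cont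
  set H : ℝ → ℝ := fun s => ∫ r in (0:ℝ)..L, (1 + r) * (y (s + d) r - y s r) ^ 2 with hH
  have hHc : Continuous H := kdv_contH (Y := fun s r => y (s + d) r - y s r)
    ((hyc.comp (by fun_prop : Continuous fun q : ℝ × ℝ => (q.1 + d, q.2))).sub hyc) (by fun_prop)
  have hHa : 0 ≤ H a := by
    apply intervalIntegral.integral_nonneg hL.le
    intro r hr
    have := hr.1
    positivity
  have := kdv_gronwall hHc (a := a) (b := t) (K := kdvK L κ R) (c := 0)
    hat.le hK le_rfl (by
      intro x hx
      filter_upwards [h.evo2 (hG x ⟨hx.1, by linarith [hx.2]⟩)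
        (hG (x + d) ⟨by linarith [hx.1], by linarith [hx.2]⟩)
        (by fun_prop : Continuous fun r : ℝ => 1 + r)] with z hz
      obtain ⟨hxz, hzs, hzi, hze⟩ := hz
      simp only [hH]
      rw [hze]
      exact intervalIntegral.integral_mono_on hxz.le hzi
        (Continuous.intervalIntegrable (by fun_prop) _ _)
        fun s hs => by
          have := h.diss (hzs s hs).2 (hzs s hs).1
          linarith)
  rw [zero_mul, add_zero] at this
  refine this.trans ?_
  have h1 : t - a ≤ T := by linarith [ha.1]
  gcongr

theorem KdvSol.step3 (h : KdvSol L T κ R y g u1 u2 u3 c) {t C : ℝ} (ht : t ∈ Ioo 0 T)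
    (hC : 0 ≤ C) (hev : ∀ᶠ d in 𝓝[>] (0:ℝ),
      ∫ r in (0:ℝ)..L, (1 + r) * (y (t + d) r - y t r) ^ 2 ≤ d ^ 2 * C) :
    ∫ x in (0:ℝ)..L, g t x ^ 2 ≤ C := by
  have hL := h.hL
  set ν : Measure ℝ := volume.restrict (Ioc 0 L) with hν
  have hlim : ∀ r ∈ Ioc 0 L, Tendsto (fun d => ENNReal.ofReal ((d⁻¹ * (y (t + d) r - y t r)) ^ 2))
      (𝓝[>] (0:ℝ)) (𝓝 (ENNReal.ofReal (g t r ^ 2))) := by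
    intro r hr
    have h1 := (h.gd t ht r ⟨hr.1.le, hr.2⟩).tendsto_slope_zero_right
    exact (ENNReal.continuous_ofReal.tendsto _).comp (by simpa using h1.pow 2)
  have hF := lintegral_liminf_le (μ := ν) (u := 𝓝[>] (0:ℝ))
    (f := fun d r => ENNReal.ofReal ((d⁻¹ * (y (t + d) r - y t r)) ^ 2)) (fun d => by
      have h1 := (h.contx (t + d)).measurable
      have h2 := (h.contx t).measurable
      fun_prop)
  have e1 : ∫⁻ r, ENNReal.ofReal (g t r ^ 2) ∂ν =
      ∫⁻ r, liminf (fun d => ENNReal.ofReal ((d⁻¹ * (y (t + d) r - y t r)) ^ 2)) (𝓝[>] (0:ℝ)) ∂ν := by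
    refine lintegral_congr_ae ?_
    refine (ae_restrict_iff' measurableSet_Ioc).2 (Eventually.of_forall fun r hr => ?_)
    exact (hlim r hr).liminf_eq.symm
  have e2 : liminf (fun d => ∫⁻ r, ENNReal.ofReal ((d⁻¹ * (y (t + d) r - y t r)) ^ 2) ∂ν)
      (𝓝[>] (0:ℝ)) ≤ ENNReal.ofReal C := by
    refine liminf_le_of_frequently_le' (Eventually.frequently ?_)
    filter_upwards [hev, self_mem_nhdsWithin] with d hd hd0
    have hd0 : 0 < d := hd0
    have hy1 := h.contx (t + d)
    have hy2 := h.contx t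
    have i1 : IntervalIntegrable (fun r => (y (t + d) r - y t r) ^ 2) volume 0 L :=
      Continuous.intervalIntegrable (by fun_prop) _ _
    have i2 : IntervalIntegrable (fun r => (1 + r) * (y (t + d) r - y t r) ^ 2) volume 0 L :=
      Continuous.intervalIntegrable (by fun_prop) _ _
    have i3 : IntervalIntegrable (fun r => (d⁻¹ * (y (t + d) r - y t r)) ^ 2) volume 0 L :=
      Continuous.intervalIntegrable (by fun_prop) _ _
    rw [← ofReal_integral_eq_lintegral_ofReal
      ((intervalIntegrable_iff_integrableOn_Ioc_of_le hL.le).1 i3)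
      (Eventually.of_forall fun r => sq_nonneg _)]
    apply ENNReal.ofReal_le_ofReal
    rw [← intervalIntegral.integral_of_le hL.le]
    have h3 : ∫ r in (0:ℝ)..L, (y (t + d) r - y t r) ^ 2 ≤ d ^ 2 * C := by
      refine le_trans ?_ hd
      refine intervalIntegral.integral_mono_on hL.le i1 i2 fun r hr => ?_
      nlinarith [hr.1, sq_nonneg (y (t + d) r - y t r)]
    simp only [mul_pow]
    rw [intervalIntegral.integral_const_mul, inv_pow]
    rw [inv_mul_le_iff₀ (by positivity)]
    exact h3
  rw [← e1] at hF
  have hfin := hF.trans e2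
  rw [← ofReal_integral_eq_lintegral_ofReal
      ((intervalIntegrable_iff_integrableOn_Ioc_of_le hL.le).1 (h.gsq ht))
      (Eventually.of_forall fun r => sq_nonneg _),
      ← intervalIntegral.integral_of_le hL.le] at hfin
  exact (ENNReal.ofReal_le_ofReal_iff hC).1 hfin
end sol
theorem KdvSol.good {L T κ R : ℝ} {y g u1 u2 u3 : ℝ → ℝ → ℝ} {c : ℝ → ℝ}
    (h : KdvSol L T κ R y g u1 u2 u3 c) : ∀ t ∈ Ioo 0 T, KdvGood L T g t := by
  by_contra hcon
  push Not at hcon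
  obtain ⟨t0, ht0, ht0n⟩ := hcon
  have hL := h.hL
  have hK := h.K_nonneg
  have hopen : IsOpen {t | KdvGood L T g t} := by
    rw [isOpen_iff_mem_nhds]
    rintro t ⟨K, hK⟩
    filter_upwards [eventually_eventually_nhds.2 hK] with s hs using ⟨K, hs⟩
  set S : Set ℝ := Ioo 0 T ∩ {t | KdvGood L T g t}ᶜ with hS
  have hSl : IsLocallyClosed S := isOpen_Ioo.isLocallyClosed.inter hopen.isClosed_compl.isLocallyClosed
  have : LocallyCompactSpace S := hSl.locallyCompactSpace
  have : Nonempty S := ⟨⟨t0, ht0, ht0n⟩⟩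
  set f : ℕ → Set S := fun n => {t | ∀ x ∈ Ioo 0 L, |g t x| ≤ n} with hf
  have hfc : ∀ n, IsClosed (f n) := by
    intro n
    have : f n = ⋂ x ∈ Ioo 0 L, {t : S | |g t x| ≤ n} := by ext t; simp [hf]
    rw [this]
    refine isClosed_biInter fun x hx => ?_
    have hcx : Continuous (fun t : S => g t x) :=
      (h.gc x ⟨hx.1.le, hx.2.le⟩).comp_continuous continuous_subtype_val fun t => t.2.1
    exact isClosed_le hcx.abs continuous_const
  have hfu : ⋃ n, f n = univ := by
    rw [eq_univ_iff_forall]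
    intro t
    obtain ⟨n, hn⟩ := h.bounded t.2.1
    exact mem_iUnion.2 ⟨n, hn⟩
  obtain ⟨n, ⟨ts, hts⟩⟩ := nonempty_interior_of_iUnion_of_closed hfc hfu
  rw [mem_interior_iff_mem_nhds, mem_nhds_subtype] at hts
  obtain ⟨V, hV, hVf⟩ := hts
  have hV' : V ∩ Ioo 0 T ∈ 𝓝 (ts : ℝ) := inter_mem hV (isOpen_Ioo.mem_nhds ts.2.1)
  obtain ⟨δ, hδ, hball⟩ := Metric.mem_nhds_iff.1 hV'
  set α := (ts : ℝ) - δ / 2 with hα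
  set β := (ts : ℝ) + δ / 2 with hβ
  have hIcc : ∀ s ∈ Icc α β, s ∈ V ∧ s ∈ Ioo 0 T := by
    intro s hs
    apply hball
    rw [Metric.mem_ball, Real.dist_eq, abs_lt]
    constructor <;> linarith [hs.1, hs.2]
  have hαI : α ∈ Ioo 0 T := (hIcc α ⟨le_rfl, by linarith⟩).2
  obtain ⟨nα, hnα⟩ := h.bounded hαI
  set m : ℝ := max (n : ℝ) nα with hm
  have hm0 : 0 ≤ m := le_max_of_le_left (Nat.cast_nonneg n)
  have hNb : ∀ a ∈ Icc α β, (a = α ∨ a ∈ S) → ∫ x in (0:ℝ)..L, g a x ^ 2 ≤ m ^ 2 * L := by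
    intro a ha hor
    have hb : ∀ x ∈ Ioo 0 L, |g a x| ≤ m := by
      intro x hx
      rcases hor with rfl | haS
      · exact (hnα x hx).trans (le_max_right _ _)
      · have : (⟨a, haS⟩ : S) ∈ f n := hVf (hIcc a ha).1
        exact (this x hx).trans (le_max_left _ _)
    have := intervalIntegral.integral_mono_on_of_le_Ioo (g := fun _ => m ^ 2) hL.le
      (h.gsq (hIcc a ha).2)
      ((continuous_const (y := m ^ 2)).intervalIntegrable _ _) (fun x hx => by
        have := hb x hx
        rw [← sq_abs (g a x)]; gcongr)
    rw [intervalIntegral.integral_const] at this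
    simp only [sub_zero, smul_eq_mul] at this
    linarith
  set C1 : ℝ := (1 + L) * (m ^ 2 * L) * Real.exp (kdvK L κ R * T + 1) * Real.exp (kdvK L κ R * T)
    with hC1
  have hC10 : 0 ≤ C1 := by positivity
  have hall : ∀ t ∈ Ioo α β, ∫ x in (0:ℝ)..L, g t x ^ 2 ≤ C1 + m ^ 2 * L := by
    intro t ht
    have htI := (hIcc t ⟨ht.1.le, ht.2.le⟩).2
    by_cases htG : KdvGood L T g t
    swap
    · have := hNb t ⟨ht.1.le, ht.2.le⟩ (Or.inr ⟨htI, htG⟩)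
      linarith
    set A : Set ℝ := Icc α t ∩ ({α} ∪ {t | KdvGood L T g t}ᶜ) with hA
    have hAc : IsCompact A :=
      isCompact_Icc.inter_right (isClosed_singleton.union hopen.isClosed_compl)
    obtain ⟨a, haA, hamax⟩ := hAc.exists_isGreatest ⟨α, ⟨le_rfl, ht.1.le⟩, Or.inl rfl⟩
    have haIcc : a ∈ Icc α β := ⟨haA.1.1, haA.1.2.trans ht.2.le⟩
    have haI := (hIcc a haIcc).2
    have hat : a < t := by
      rcases haA.1.2.eq_or_lt with e | e
      · rcases haA.2 with e' | e'
        · rw [mem_singleton_iff] at e'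
          linarith [ht.1]
        · rw [e] at e'
          exact absurd htG e'
      · exact e
    have haN : ∫ x in (0:ℝ)..L, g a x ^ 2 ≤ m ^ 2 * L := by
      apply hNb a haIcc
      rcases haA.2 with e | e
      · exact Or.inl e
      · exact Or.inr ⟨haI, e⟩
    have hgap : ∀ s ∈ Ioo a t, KdvGood L T g s := by
      intro s hs
      by_contra hsn
      have := hamax (show s ∈ A from ⟨⟨haA.1.1.trans hs.1.le, hs.2.le⟩, Or.inr hsn⟩)
      linarith [hs.1]
    obtain ⟨η, hη, hηb⟩ := Metric.isOpen_iff.1 hopen t htG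
    have hG : ∀ d ∈ Ioo 0 η, ∀ s ∈ Ioo a (t + d), KdvGood L T g s := by
      intro d hd s hs
      rcases lt_or_ge s t with hst | hst
      · exact hgap s ⟨hs.1, hst⟩
      · apply hηb
        rw [Metric.mem_ball, Real.dist_eq, abs_of_nonneg (by linarith)]
        linarith [hs.2, hd.2]
    have : ∫ x in (0:ℝ)..L, g t x ^ 2 ≤ C1 := by
      apply h.step3 htI hC10
      filter_upwards [Ioo_mem_nhdsGT (lt_min hη h.hT)] with d hd
      have hdη : d < η := hd.2.trans_le (min_le_left _ _)
      have hdT : d < T := hd.2.trans_le (min_le_right _ _)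
      have s1 := h.step1 haI hd.1 hdT.le
        (fun s hs => hG d ⟨hd.1, hdη⟩ s ⟨hs.1, by linarith [hs.2]⟩) haN
      have s2 := h.step2 haI hat htI.2 hd.1 (hG d ⟨hd.1, hdη⟩)
      refine s2.trans ?_
      calc _ ≤ (d ^ 2 * ((1 + L) * (m ^ 2 * L) * Real.exp (kdvK L κ R * T + 1))) *
            Real.exp (kdvK L κ R * T) := by gcongr
        _ = _ := by rw [hC1]; ring
    have h0 : 0 ≤ m ^ 2 * L := by positivity
    linarith
  apply ts.2.2
  refine ⟨C1 + m ^ 2 * L, ?_⟩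
  filter_upwards [Ioo_mem_nhds (show α < ts by linarith) (show (ts : ℝ) < β by linarith)] with s hs
  exact ⟨(hIcc s ⟨hs.1.le, hs.2.le⟩).2, hall s hs⟩

theorem kdv_sup {L : ℝ} (hL : 0 < L) {u u1 u2 u3 : ℝ → ℝ} (hu : KdvSt L u u1 u2 u3) {l : ℝ}
    (hl : 0 < l) {x : ℝ} (hx : x ∈ Icc 0 L) :
    |u x| ≤ l / 2 * (∫ r in (0:ℝ)..L, u1 r ^ 2) + L / (2 * l) := by
  obtain ⟨uc0, uc1, uc2, uc3, ud0, ud1, ud2, ub0, ubL, ub1⟩ := hu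
  have hsub : Icc 0 x ⊆ Icc 0 L := Icc_subset_Icc_right hx.2
  have hii : ∀ {f : ℝ → ℝ}, ContinuousOn f (Icc 0 L) → IntervalIntegrable f volume 0 x := by
    intro f hf
    apply ContinuousOn.intervalIntegrable
    rw [uIcc_of_le hx.1]
    exact hf.mono hsub
  have e := intervalIntegral.integral_eq_sub_of_hasDerivAt_of_le hx.1 (uc0.mono hsub)
    (fun r hr => ud0 r ⟨hr.1, hr.2.trans_le hx.2⟩) (hii uc1)
  rw [ub0, sub_zero] at e
  have hc : ContinuousOn (fun r => l / 2 * u1 r ^ 2 + 1 / (2 * l)) (Icc 0 L) := by fun_prop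
  rw [← e]
  calc _ ≤ ∫ r in (0:ℝ)..x, |u1 r| := intervalIntegral.abs_integral_le_integral_abs hx.1
    _ ≤ ∫ r in (0:ℝ)..x, (l / 2 * u1 r ^ 2 + 1 / (2 * l)) := by
        refine intervalIntegral.integral_mono_on hx.1 (hii uc1.abs) (hii hc) fun r _ => ?_
        have : l / 2 * u1 r ^ 2 + 1 / (2 * l) - |u1 r| = (l * |u1 r| - 1) ^ 2 / (2 * l) := by
          rw [← sq_abs (u1 r)]; field_simp; ring
        have h2 : 0 ≤ (l * |u1 r| - 1) ^ 2 / (2 * l) := by positivity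
        linarith
    _ ≤ ∫ r in (0:ℝ)..L, (l / 2 * u1 r ^ 2 + 1 / (2 * l)) := by
        refine intervalIntegral.integral_mono_interval le_rfl hx.1 hx.2 ?_ (kdv_ii hL hc)
        exact Eventually.of_forall fun r => by simp only [Pi.zero_apply]; positivity
    _ = _ := by
        rw [intervalIntegral.integral_add (kdv_ii hL (by fun_prop)) (kdv_ii hL (by fun_prop)),
          intervalIntegral.integral_const_mul, intervalIntegral.integral_const, smul_eq_mul]
        ring

theorem kdv_en {L : ℝ} (hL : 0 < L) {u u1 u2 u3 gu : ℝ → ℝ} (hu : KdvSt L u u1 u2 u3) {c : ℝ}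
    (hgu : ∀ x ∈ Ioo 0 L, gu x = - u1 x - u3 x - c * (u x * u1 x)) :
    ∫ x in (0:ℝ)..L, 2 * 1 * (u x - 0) * gu x ≤ 0 := by
  obtain ⟨uc0, uc1, uc2, uc3, ud0, ud1, ud2, ub0, ubL, ub1⟩ := hu
  have hFint := intervalIntegral.integral_eq_sub_of_hasDerivAt_of_le hL.le
    (f := fun x => -(u x ^ 2) - 2 * (u x * u2 x) + u1 x ^ 2 - 2 / 3 * c * u x ^ 3)
    (f' := fun x => 2 * u x * (- u1 x - u3 x - c * (u x * u1 x))) (by fun_prop) (by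
      intro x hx
      have := ((((ud0 x hx).pow 2).neg.sub (((ud0 x hx).mul (ud2 x hx)).const_mul 2)).add
        ((ud1 x hx).pow 2)).sub (((ud0 x hx).pow 3).const_mul (2 / 3 * c))
      refine this.congr_deriv ?_
      push_cast
      ring) (kdv_ii hL (by fun_prop))
  rw [intervalIntegral.integral_congr_Ioo_of_le hL.le
    (g := fun x => 2 * u x * (- u1 x - u3 x - c * (u x * u1 x)))
    (fun x hx => by simp only [hgu x hx]; ring), hFint]
  simp only [ub0, ubL, ub1]
  nlinarith [sq_nonneg (u1 0)]

theorem kdv_vir {L : ℝ} (hL : 0 < L) {u u1 u2 u3 gu : ℝ → ℝ} (hu : KdvSt L u u1 u2 u3) {c : ℝ}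
    (hc0 : 0 ≤ c) (hc1 : c ≤ 1)
    (hgu : ∀ x ∈ Ioo 0 L, gu x = - u1 x - u3 x - c * (u x * u1 x)) :
    ∫ x in (0:ℝ)..L, 2 * x * (u x - 0) * gu x ≤
      -(3 / 2) * (∫ x in (0:ℝ)..L, (u x ^ 2 + u1 x ^ 2)) + 5 / 2 * (∫ x in (0:ℝ)..L, u x ^ 2)
        + 2 * L / 27 * (∫ x in (0:ℝ)..L, u x ^ 2) ^ 2 := by
  have hu' := hu
  obtain ⟨uc0, uc1, uc2, uc3, ud0, ud1, ud2, ub0, ubL, ub1⟩ := hu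
  have hFint := intervalIntegral.integral_eq_sub_of_hasDerivAt_of_le hL.le
    (f := fun x => -(x * u x ^ 2) - 2 * (x * (u x * u2 x)) + 2 * (u x * u1 x) + x * u1 x ^ 2
      - 2 / 3 * c * (x * u x ^ 3))
    (f' := fun x => 2 * x * u x * (- u1 x - u3 x - c * (u x * u1 x)) -
      (u x ^ 2 - 3 * u1 x ^ 2 + 2 / 3 * c * u x ^ 3)) (by fun_prop) (by
      intro x hx
      have p := hasDerivAt_id' x
      have := (((((p.mul ((ud0 x hx).pow 2)).neg.sub
        ((p.mul ((ud0 x hx).mul (ud2 x hx))).const_mul 2)).add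
        (((ud0 x hx).mul (ud1 x hx)).const_mul 2)).add (p.mul ((ud1 x hx).pow 2)))).sub
        ((p.mul ((ud0 x hx).pow 3)).const_mul (2 / 3 * c))
      refine this.congr_deriv ?_
      simp only [Pi.mul_apply, Pi.pow_apply]
      push_cast
      ring) (kdv_ii hL (by fun_prop))
  rw [intervalIntegral.integral_congr_Ioo_of_le hL.le
    (g := fun x => 2 * x * u x * (- u1 x - u3 x - c * (u x * u1 x)))
    (fun x hx => by simp only [hgu x hx]; ring)]
  rw [intervalIntegral.integral_sub (kdv_ii hL (by fun_prop)) (kdv_ii hL (by fun_prop)),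
    intervalIntegral.integral_add (kdv_ii hL (by fun_prop)) (kdv_ii hL (by fun_prop)),
    intervalIntegral.integral_sub (kdv_ii hL (by fun_prop)) (kdv_ii hL (by fun_prop)),
    intervalIntegral.integral_const_mul 3] at hFint
  simp only [ub0, ubL, ub1] at hFint
  rw [intervalIntegral.integral_add (kdv_ii hL (by fun_prop)) (kdv_ii hL (by fun_prop))]
  set E := ∫ x in (0:ℝ)..L, u x ^ 2 with hE
  set P := ∫ x in (0:ℝ)..L, u1 x ^ 2 with hP
  have hE0 : 0 ≤ E := intervalIntegral.integral_nonneg hL.le fun x _ => sq_nonneg _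
  have hP0 : 0 ≤ P := intervalIntegral.integral_nonneg hL.le fun x _ => sq_nonneg _
  have hX : ∀ l > 0, ∫ x in (0:ℝ)..L, 2 / 3 * c * u x ^ 3 ≤
      2 / 3 * (l / 2 * P + L / (2 * l)) * E := by
    intro l hl
    rw [hE, ← intervalIntegral.integral_const_mul]
    refine intervalIntegral.integral_mono_on hL.le (kdv_ii hL (by fun_prop))
      (kdv_ii hL (by fun_prop)) fun x hx => ?_
    have h1 := kdv_sup hL hu' hl hx
    have h2 : c * u x ≤ |u x| := by
      calc c * u x ≤ c * |u x| := by gcongr; exact le_abs_self _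
        _ ≤ 1 * |u x| := by gcongr
        _ = _ := one_mul _
    have h3 := mul_le_mul_of_nonneg_right (h2.trans h1) (sq_nonneg (u x))
    have e : 2 / 3 * c * u x ^ 3 = 2 / 3 * (c * u x * u x ^ 2) := by ring
    rw [e]
    linarith
  have hX' : ∫ x in (0:ℝ)..L, 2 / 3 * c * u x ^ 3 ≤ 3 / 2 * P + 2 * L / 27 * E ^ 2 := by
    rcases hE0.eq_or_lt with e | e
    · have := hX 1 one_pos
      rw [← e] at this ⊢
      nlinarith
    · refine (hX (9 / (2 * E)) (by positivity)).trans (le_of_eq ?_)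
      field_simp
      ring
  nlinarith

theorem KdvSol.final {L T κ R : ℝ} {y g u1 u2 u3 : ℝ → ℝ → ℝ} {c : ℝ → ℝ}
    (h : KdvSol L T κ R y g u1 u2 u3 c) :
    ∫ t in (0:ℝ)..T, ∫ x in (0:ℝ)..L, (y t x ^ 2 + u1 t x ^ 2) ≤
      (8 * T + 2 * L) / 3 * (∫ x in (0:ℝ)..L, y 0 x ^ 2)
        + L * T * (∫ x in (0:ℝ)..L, y 0 x ^ 2) ^ 2 := by
  have hL := h.hL
  have hT := h.hT
  have hyc : Continuous (fun q : ℝ × ℝ => y q.1 q.2) := h.cont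
  set E0 := ∫ x in (0:ℝ)..L, y 0 x ^ 2 with hE0
  have hE00 : 0 ≤ E0 := intervalIntegral.integral_nonneg hL.le fun x _ => sq_nonneg _
  set Q : ℝ → ℝ := fun t => ∫ x in (0:ℝ)..L, (y t x ^ 2 + u1 t x ^ 2) with hQ
  by_cases hQi : IntervalIntegrable Q volume 0 T
  swap
  · rw [intervalIntegral.integral_undef hQi]
    positivity
  have hEc : Continuous (fun s => ∫ r in (0:ℝ)..L, 1 * (y s r - 0) ^ 2) :=
    kdv_contH (Y := fun s r => y s r - 0) (hyc.sub continuous_const) (p := fun _ => 1)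
      continuous_const
  have hVc : Continuous (fun s => ∫ r in (0:ℝ)..L, r * (y s r - 0) ^ 2) :=
    kdv_contH (Y := fun s r => y s r - 0) (hyc.sub continuous_const) (p := fun r => r)
      continuous_id
  have hE : ∀ t ∈ Icc 0 T, ∫ x in (0:ℝ)..L, y t x ^ 2 ≤ E0 := by
    intro t ht
    have := kdv_local_antitone ht.1 hEc.continuousOn (by
      intro x hx
      filter_upwards [h.evo (h.good x ⟨hx.1, hx.2.trans_le ht.2⟩) (v := fun _ => 0)
        (p := fun _ => 1) continuous_const continuous_const] with z hz
      obtain ⟨hxz, hzs, hzi, hze⟩ := hz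
      have : ∫ s in x..z, ∫ r in (0:ℝ)..L, 2 * 1 * (y s r - 0) * g s r ≤ 0 := by
        have := intervalIntegral.integral_mono_on (g := fun _ => (0:ℝ)) hxz.le hzi
          ((continuous_const (y := (0:ℝ))).intervalIntegrable _ _) fun s hs =>
          kdv_en hL (h.st s (hzs s hs)) (h.pde s (hzs s hs))
        simpa using this
      linarith)
    simpa using this
  set M : ℝ := 5 / 2 * E0 + 2 * L / 27 * E0 ^ 2 with hM
  have hfin := kdv_local_antitone (f := fun s => (∫ r in (0:ℝ)..L, r * (y s r - 0) ^ 2)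
    + 3 / 2 * (∫ t in (0:ℝ)..s, Q t) - M * s) hT.le (by
      have hp : ContinuousOn (fun s => ∫ t in (0:ℝ)..s, Q t) (Icc 0 T) := by
        have := intervalIntegral.continuousOn_primitive_interval' hQi (left_mem_uIcc)
        rwa [uIcc_of_le hT.le] at this
      have := hVc.continuousOn (s := Icc 0 T)
      fun_prop) (by
      intro x hx
      filter_upwards [h.evo (h.good x hx) (v := fun _ => 0)
        (p := fun r => r) continuous_const continuous_id] with z hz
      obtain ⟨hxz, hzs, hzi, hze⟩ := hz
      have hxT : x ∈ Ioo 0 T := hx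
      have hzT := hzs z ⟨hxz.le, le_rfl⟩
      have hq1 : IntervalIntegrable Q volume 0 x := hQi.mono_set (by
        rw [uIcc_of_le hT.le, uIcc_of_le hx.1.le]; exact Icc_subset_Icc_right hx.2.le)
      have hq2 : IntervalIntegrable Q volume x z := hQi.mono_set (by
        rw [uIcc_of_le hT.le, uIcc_of_le hxz.le]; exact Icc_subset_Icc hx.1.le hzT.2.le)
      have e1 := intervalIntegral.integral_add_adjacent_intervals hq1 hq2
      have hq3 : IntervalIntegrable (fun s => -(3 / 2) * Q s + M) volume x z :=
        (hq2.const_mul _).add (continuous_const.intervalIntegrable _ _)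
      have := intervalIntegral.integral_mono_on hxz.le hzi hq3 fun s hs => by
        have h1 := kdv_vir hL (h.st s (hzs s hs)) (h.c0 s) (h.c1 s) (h.pde s (hzs s hs))
        have h2 := hE s ⟨(hzs s hs).1.le, (hzs s hs).2.le⟩
        have h3 : 0 ≤ ∫ x in (0:ℝ)..L, y s x ^ 2 :=
          intervalIntegral.integral_nonneg hL.le fun x _ => sq_nonneg _
        have h4 : (∫ x in (0:ℝ)..L, y s x ^ 2) ^ 2 ≤ E0 ^ 2 := by gcongr
        have h5 : 2 * L / 27 * (∫ x in (0:ℝ)..L, y s x ^ 2) ^ 2 ≤ 2 * L / 27 * E0 ^ 2 := by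
          gcongr
        simp only [hQ, hM]
        linarith
      rw [intervalIntegral.integral_add (hq2.const_mul _) (continuous_const.intervalIntegrable _ _),
        intervalIntegral.integral_const_mul, intervalIntegral.integral_const, smul_eq_mul] at this
      rw [← hze] at this
      linarith)
  simp only [intervalIntegral.integral_same, sub_zero] at hfin
  have hy0 := h.contx 0
  have hVT : 0 ≤ ∫ r in (0:ℝ)..L, r * y T r ^ 2 :=
    intervalIntegral.integral_nonneg hL.le fun r hr => mul_nonneg hr.1 (sq_nonneg _)
  have hV0 : ∫ r in (0:ℝ)..L, r * y 0 r ^ 2 ≤ L * E0 := by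
    rw [hE0, ← intervalIntegral.integral_const_mul]
    refine intervalIntegral.integral_mono_on hL.le (Continuous.intervalIntegrable (by fun_prop) _ _)
      (Continuous.intervalIntegrable (by fun_prop) _ _) fun r hr => ?_
    have := hr.2
    gcongr
  have h1 : 0 ≤ T * E0 := by positivity
  have h2 : 0 ≤ L * T * E0 ^ 2 := by positivity
  rw [hM] at hfin
  nlinarith

theorem kdv_st_of {L : ℝ} (hL : 0 < L) {f F : ℝ → ℝ} (hf : ContDiffOn ℝ 3 f (Icc 0 L))
    (hF : ∀ x ∈ Icc 0 L, F x = f x) (h0 : f 0 = 0) (h1 : f L = 0)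
    (h2 : derivWithin f (Icc 0 L) L = 0) :
    KdvSt L F (derivWithin f (Icc 0 L)) (iteratedDerivWithin 2 f (Icc 0 L))
      (iteratedDerivWithin 3 f (Icc 0 L)) := by
  have hu : UniqueDiffOn ℝ (Icc 0 L) := uniqueDiffOn_Icc hL
  have e1 : iteratedDerivWithin 1 f (Icc 0 L) = derivWithin f (Icc 0 L) :=
    iteratedDerivWithin_one
  have key : ∀ m : ℕ, ((m : ℕ∞) : WithTop ℕ∞) < 3 → ∀ x ∈ Ioo 0 L,
      HasDerivAt (iteratedDerivWithin m f (Icc 0 L))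
        (iteratedDerivWithin (m + 1) f (Icc 0 L) x) x := by
    intro m hm x hx
    have hd := hf.differentiableOn_iteratedDerivWithin hm hu x (Ioo_subset_Icc_self hx)
    rw [iteratedDerivWithin_succ]
    exact hd.hasDerivWithinAt.hasDerivAt (Icc_mem_nhds hx.1 hx.2)
  refine ⟨hf.continuousOn.congr hF, ?_, ?_, ?_, ?_, ?_, ?_, ?_, ?_, h2⟩
  · rw [← e1]; exact hf.continuousOn_iteratedDerivWithin (by norm_num) hu
  · exact hf.continuousOn_iteratedDerivWithin (by norm_num) hu
  · exact hf.continuousOn_iteratedDerivWithin (by norm_num) hu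
  · intro x hx
    have hd := (hf.differentiableOn (by norm_num)) x (Ioo_subset_Icc_self hx)
    refine (hd.hasDerivWithinAt.hasDerivAt (Icc_mem_nhds hx.1 hx.2)).congr_of_eventuallyEq ?_
    filter_upwards [Icc_mem_nhds hx.1 hx.2] with z hz using hF z hz
  · rw [← e1]; exact key 1 (by norm_num)
  · exact key 2 (by norm_num)
  · rw [hF 0 ⟨le_rfl, hL.le⟩, h0]
  · rw [hF L ⟨hL.le, le_rfl⟩, h1]

/-- there is `C > 0` such that for every `ε > 0`, every `T > 0`, every
initial datum `y₀` and every classical solution `y` of the modified KdV system with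
`y(0,·) = y₀`, one has
`‖y‖²_{L²(0,T;H₀¹(0,L))} ≤ ((8T + 2L)/3) ‖y₀‖²_{L²(0,L)} + C T ‖y₀‖⁴_{L²(0,L)}`. -/
theorem modifiedKdV_spacetime_H1_bound (L : ℝ) (hL : 0 < L)
    (Φ : ℝ → ℝ) (hΦ : IsCutoff Φ) :
    ∃ C > 0, ∀ ε > 0, ∀ T > 0, ∀ y₀ : ℝ → ℝ, ∀ y : ℝ → ℝ → ℝ,
      IsModifiedKdVSol L T ε Φ y → (∀ x ∈ Icc (0:ℝ) L, y 0 x = y₀ x) →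
      (∫ t in (0:ℝ)..T, ∫ x in (0:ℝ)..L,
          ((y t x) ^ 2 + (derivWithin (y t) (Icc (0:ℝ) L) x) ^ 2))
        ≤ (8 * T + 2 * L) / 3 * (∫ x in (0:ℝ)..L, (y₀ x) ^ 2)
          + C * T * (∫ x in (0:ℝ)..L, (y₀ x) ^ 2) ^ 2 := by
  refine ⟨L, hL, ?_⟩
  intro ε hε T hT y₀ y hy hy0
  obtain ⟨hyx, hyt, hyc, hpde, hbc⟩ := hy
  obtain ⟨hΦs, hΦI, -, -, -⟩ := hΦ
  set Y : ℝ → ℝ → ℝ := fun t x => y (projIcc 0 T hT.le t) (projIcc 0 L hL.le x) with hY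
  have hYe : ∀ t ∈ Icc 0 T, ∀ x ∈ Icc 0 L, Y t x = y t x := by
    intro t ht x hx
    simp only [hY, projIcc_of_mem hT.le ht, projIcc_of_mem hL.le hx]
  have hYc : Continuous (Function.uncurry Y) := by
    have : Continuous (fun p : ℝ × ℝ => (((projIcc 0 T hT.le p.1 : ℝ)), ((projIcc 0 L hL.le p.2 : ℝ)))) := by
      refine Continuous.prodMk ?_ ?_
      · exact continuous_subtype_val.comp (continuous_projIcc.comp continuous_fst)
      · exact continuous_subtype_val.comp (continuous_projIcc.comp continuous_snd)
    exact hyc.comp_continuous this fun p =>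
      ⟨(projIcc 0 T hT.le p.1).2, (projIcc 0 L hL.le p.2).2⟩
  have hYx : ∀ t, Continuous (Y t) := fun t =>
    hYc.comp (by fun_prop : Continuous fun x : ℝ => (t, x))
  obtain ⟨R0, hR0⟩ := (isCompact_Icc.prod isCompact_Icc).exists_bound_of_continuousOn hyc
  set R : ℝ := max R0 0 with hR
  have hR' : 0 ≤ R := le_max_right _ _
  have hYb : ∀ t x, |Y t x| ≤ R := by
    intro t x
    have := hR0 ((projIcc 0 T hT.le t : ℝ), (projIcc 0 L hL.le x : ℝ))
      ⟨(projIcc 0 T hT.le t).2, (projIcc 0 L hL.le x).2⟩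
    exact this.trans (le_max_left _ _)
  have hn0 : ∀ t, 0 ≤ L2norm L (Y t) := fun t => Real.sqrt_nonneg _
  have hnB : ∀ t, L2norm L (Y t) ≤ Real.sqrt (R ^ 2 * L) := by
    intro t
    apply Real.sqrt_le_sqrt
    have := intervalIntegral.integral_mono_on (f := fun x => Y t x ^ 2) (g := fun _ => R ^ 2)
      (μ := volume) hL.le
      (((hYx t).pow 2).intervalIntegrable _ _)
      ((continuous_const (y := R ^ 2)).intervalIntegrable _ _) (fun x hx => by
        have := hYb t x
        rw [← sq_abs (Y t x)]; gcongr)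
    rw [intervalIntegral.integral_const] at this
    simp only [sub_zero, smul_eq_mul] at this
    linarith
  have hne : ∀ t ∈ Icc 0 T, L2norm L (Y t) = L2norm L (y t) := by
    intro t ht
    unfold L2norm
    congr 1
    apply intervalIntegral.integral_congr
    intro x hx
    rw [uIcc_of_le hL.le] at hx
    simp only [hYe t ht x hx]
  set B : ℝ := Real.sqrt (R ^ 2 * L) / ε with hB
  obtain ⟨K, hK⟩ := (hΦs.contDiffOn (s := Icc 0 B)).exists_lipschitzOnWith (by norm_num)
    (convex_Icc 0 B) isCompact_Icc
  have hmem : ∀ t, L2norm L (Y t) / ε ∈ Icc 0 B := fun t =>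
    ⟨div_nonneg (hn0 t) hε.le, div_le_div_of_nonneg_right (hnB t) hε.le⟩
  have hder : ∀ t ∈ Ioo 0 T, ∀ x ∈ Icc 0 L, HasDerivAt (fun s => Y s x)
      (derivWithin (fun s => y s x) (Icc 0 T) t) t := by
    intro t ht x hx
    have hd := ((hyt x hx).differentiableOn (by norm_num)) t (Ioo_subset_Icc_self ht)
    refine (hd.hasDerivWithinAt.hasDerivAt (Icc_mem_nhds ht.1 ht.2)).congr_of_eventuallyEq ?_
    filter_upwards [Icc_mem_nhds ht.1 ht.2] with z hz using hYe z hz x hx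
  have hsol : KdvSol L T (K / ε) R Y (fun t x => deriv (fun s => Y s x) t)
      (fun t => derivWithin (y t) (Icc 0 L)) (fun t => iteratedDerivWithin 2 (y t) (Icc 0 L))
      (fun t => iteratedDerivWithin 3 (y t) (Icc 0 L)) (fun t => Φ (L2norm L (Y t) / ε)) := by
    refine ⟨hL, hT, div_nonneg K.2 hε.le, hR', hYc, hYb, ?_, ?_, ?_, ?_, ?_, ?_, ?_, ?_⟩
    · have hm : Measurable (fun p : ℝ × ℝ => deriv (fun s => Y s p.1) p.2) :=
        measurable_deriv_with_param (f := fun x s => Y s x) (hYc.comp continuous_swap)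
      exact hm.comp measurable_swap
    · intro t ht x hx
      rw [(hder t ht x hx).deriv]
      exact hder t ht x hx
    · intro x hx
      have hc : ContinuousOn (derivWithin (fun s => y s x) (Icc 0 T)) (Icc 0 T) :=
        (hyt x hx).continuousOn_derivWithin (uniqueDiffOn_Icc hT) le_rfl
      exact (hc.mono Ioo_subset_Icc_self).congr fun s hs => (hder s hs x hx).deriv
    · intro t ht
      have ht' := Ioo_subset_Icc_self ht
      obtain ⟨a, b, d⟩ := hbc t ht'
      exact kdv_st_of hL (hyx t ht') (hYe t ht') a b d
    · intro t ht x hx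
      have ht' := Ioo_subset_Icc_self ht
      have hx' := Ioo_subset_Icc_self hx
      have := hpde t ht x hx
      simp only [(hder t ht x hx').deriv, hne t ht', hYe t ht' x hx']
      linarith
    · intro t
      exact (hΦI _ (hmem t).1).1
    · intro t
      exact (hΦI _ (hmem t).1).2
    · intro s t
      have h1 := hK.dist_le_mul _ (hmem s) _ (hmem t)
      rw [Real.dist_eq, Real.dist_eq, ← sub_div, abs_div, abs_of_pos hε] at h1
      refine h1.trans ?_
      rw [mul_div_assoc', div_mul_eq_mul_div]
      have := kdv_tri hL (hYx s).continuousOn (hYx t).continuousOn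
      have hK0 : (0:ℝ) ≤ K := K.2
      gcongr
  have hfin := hsol.final
  have e0 : ∫ x in (0:ℝ)..L, Y 0 x ^ 2 = ∫ x in (0:ℝ)..L, (y₀ x) ^ 2 := by
    apply intervalIntegral.integral_congr
    intro x hx
    rw [uIcc_of_le hL.le] at hx
    simp only [hYe 0 ⟨le_rfl, hT.le⟩ x hx, hy0 x hx]
  have e1 : (∫ t in (0:ℝ)..T, ∫ x in (0:ℝ)..L,
      (Y t x ^ 2 + derivWithin (y t) (Icc 0 L) x ^ 2)) = ∫ t in (0:ℝ)..T, ∫ x in (0:ℝ)..L,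
          ((y t x) ^ 2 + (derivWithin (y t) (Icc (0:ℝ) L) x) ^ 2) := by
    apply intervalIntegral.integral_congr
    intro t ht
    rw [uIcc_of_le hT.le] at ht
    apply intervalIntegral.integral_congr
    intro x hx
    rw [uIcc_of_le hL.le] at hx
    simp only [hYe t ht x hx]
  rw [← e1, ← e0]
  exact hfin
end
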